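/- arXiv:2002.11087 — 2 statements merged into one kernel-verified Lean document; each statement's English description precedes it below -/
import Mathlib

section
/- Let q be a primitive third root of unity and B = k⟨x_1,x_2⟩/⟨(ad_c x_1)^4 x_2, (ad_c x_2)^2 x_1⟩ with braiding matrix q_11 = q, q_22 = 1, q_12 q_21 = 1. Then B is linearly spanned by the monomials x_2^{n_1} x_{12}^{n_2} x_{11122}^{n_3} x_{112}^{n_4} x_{1112}^{n_5} x_1^{n_6} with n_i ≥ 0, where x_{12} = (ad_c x_1)x_2, x_{112} = (ad_c x_1)^2 x_2, x_{1112} = (ad_c x_1)^3 x_2, and x_{11122} = [x_{112}, x_{12}]_c. -/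
noncomputable section

namespace Stmt6

variable {k : Type*} [Field k]

/-- The bicharacter on `ℤ²` extending a braiding matrix `Q`. -/
def qb (Q : Fin 2 → Fin 2 → k) (α β : Fin 2 → ℤ) : k :=
  ∏ a, ∏ b, Q a b ^ (α a * β b)

/-- Degree of the generator `x_a`. -/
def ee (a : Fin 2) : Fin 2 → ℤ := Pi.single a 1

/-- Braided commutator of two homogeneous elements carried with their degrees. -/
def brk (Q : Fin 2 → Fin 2 → k) (p r : FreeAlgebra k (Fin 2) × (Fin 2 → ℤ)) :
    FreeAlgebra k (Fin 2) × (Fin 2 → ℤ) :=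
  (p.1 * r.1 - qb Q p.2 r.2 • (r.1 * p.1), p.2 + r.2)

/-- The generator `x_a` together with its degree. -/
def gen (a : Fin 2) : FreeAlgebra k (Fin 2) × (Fin 2 → ℤ) :=
  (FreeAlgebra.ι k a, ee a)

end Stmt6

open Stmt6

/-!
If a finite ordered family of generators is such that every later generator moves to the right past
an earlier one `g` at the cost of terms in the generators after `g`, then the ordered monomials span
the algebra. For the six root vectors this amounts to computing their braided commutators. They
arise from `[x₁₂, x₂]_c = 0`, which is the second Serre relation, by repeatedly applying the skew
derivation `[x₁, ·]_c`, whose values on the root vectors are the definitions and the first Serre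
relation. At `[x₁₁₁₂, x₂]_c = 2 q₁₂ x₁₁₁₂₂` and `[x₁₁₁₂₂, x₂]_c = 3 q₁₂² x₁₂³` both sides of the
differentiated relation turn out to be multiples of one braided commutator `t`, namely
`q₁₂ t = 2 q₁₂ t` and `q₁₂² t = 3 q₁₂² t`, so that `t = 0`.
-/

section Straightening

open Algebra
open Subalgebra (toSubmodule isIdempotentElem_toSubmodule)
open Submodule (span)

variable {R A : Type*} [CommSemiring R] [Semiring A] [Algebra R A]

theorem toSubmodule_adjoin_le {s : Set A} {M : Submodule R A} (one_mem : 1 ∈ M)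
    (mul_mem : ∀ a ∈ s, ∀ m ∈ M, a * m ∈ M) : toSubmodule (adjoin R s) ≤ M := by
  rw [adjoin_eq_span, Submodule.span_le]
  exact fun _ hx ↦ Submonoid.closure_induction_left one_mem (fun a ha m _ ↦ mul_mem a ha m) hx

theorem toSubmodule_sup_le_mul {S T : Subalgebra R A}
    (h : toSubmodule T * toSubmodule S ≤ toSubmodule S * toSubmodule T) :
    toSubmodule (S ⊔ T) ≤ toSubmodule S * toSubmodule T := by
  have left_mul : toSubmodule S * (toSubmodule S * toSubmodule T) ≤
      toSubmodule S * toSubmodule T := by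
    rw [← mul_assoc, isIdempotentElem_toSubmodule]
  have right_mul : toSubmodule T * (toSubmodule S * toSubmodule T) ≤
      toSubmodule S * toSubmodule T := by
    grw [← mul_assoc, h, mul_assoc, (isIdempotentElem_toSubmodule T).eq]
  have one_mem_left : 1 ∈ toSubmodule S := one_mem S
  have one_mem_right : 1 ∈ toSubmodule T := one_mem T
  refine toSubmodule_adjoin_le (by simpa using Submodule.mul_mem_mul one_mem_left one_mem_right) ?_
  rintro a (ha | ha) m hm
  · exact left_mul (Submodule.mul_mem_mul ha hm)
  · exact right_mul (Submodule.mul_mem_mul ha hm)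

theorem adjoin_mul_span_singleton_le {g : A} {C : Set A}
    (h : ∀ c ∈ C, c * g ∈ span R {g} * toSubmodule (adjoin R C) ⊔ toSubmodule (adjoin R C)) :
    toSubmodule (adjoin R C) * span R {g} ≤
      span R {g} * toSubmodule (adjoin R C) ⊔ toSubmodule (adjoin R C) := by
  set D := toSubmodule (adjoin R C)
  set N := span R {g} * D ⊔ D
  have hDD : D * D = D := isIdempotentElem_toSubmodule _
  have hCN (c : A) (hc : c ∈ C) : span R {c} * N ≤ N := calc
    span R {c} * N = span R {c} * span R {g} * D ⊔ span R {c} * D := by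
      rw [Submodule.mul_sup, mul_assoc]
    _ ≤ N * D ⊔ D * D := by
      gcongr
      · simpa only [Submodule.span_mul_span, Set.singleton_mul_singleton,
          Submodule.span_singleton_le_iff_mem] using h c hc
      · exact (Submodule.span_singleton_le_iff_mem _ _).2 (subset_adjoin hc)
    _ = N := by rw [Submodule.sup_mul, mul_assoc, hDD, sup_assoc, sup_idem]
  have one_mem_D : 1 ∈ D := one_mem (adjoin R C)
  have hDg : D ≤ N.comap (LinearMap.mulRight R g) := by
    refine toSubmodule_adjoin_le ?_ fun c hc m hm ↦ ?_
    · simpa using Submodule.mem_sup_left (T := D) (Submodule.mul_mem_mul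
        (Submodule.mem_span_singleton_self g) one_mem_D)
    · simpa [mul_assoc] using hCN c hc
        (Submodule.mul_mem_mul (Submodule.mem_span_singleton_self c) hm)
  rw [Submodule.mul_le]
  intro d hd x hx
  obtain ⟨r, rfl⟩ := Submodule.mem_span_singleton.1 hx
  rw [mul_smul_comm]
  exact N.smul_mem r (hDg hd)

theorem toSubmodule_adjoin_singleton (g : A) :
    toSubmodule (adjoin R {g}) = span R (Set.range fun n : ℕ ↦ g ^ n) := by
  rw [adjoin_eq_span, ← Submonoid.powers_eq_closure, Submonoid.coe_powers]

theorem adjoin_mul_adjoin_singleton_le {g : A} {C : Set A}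
    (h : ∀ c ∈ C, c * g ∈ span R {g} * toSubmodule (adjoin R C) ⊔ toSubmodule (adjoin R C)) :
    toSubmodule (adjoin R C) * toSubmodule (adjoin R {g}) ≤
      toSubmodule (adjoin R {g}) * toSubmodule (adjoin R C) := by
  set D := toSubmodule (adjoin R C)
  set P := toSubmodule (adjoin R {g})
  have hgP : span R {g} ≤ P := by
    rw [Submodule.span_singleton_le_iff_mem]
    exact self_mem_adjoin_singleton R g
  have hPP : P * P = P := isIdempotentElem_toSubmodule _
  have pow_le (n : ℕ) : D * span R {g} ^ n ≤ P * D := by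
    induction n with
    | zero =>
      have one_le : 1 ≤ P := Submodule.one_le.2 (one_mem (adjoin R {g}))
      simpa using mul_le_mul_left one_le D
    | succ n ih =>
      calc D * span R {g} ^ (n + 1) = D * span R {g} * span R {g} ^ n := by
            rw [pow_succ', mul_assoc]
        _ ≤ (span R {g} * D ⊔ D) * span R {g} ^ n := by
            grw [adjoin_mul_span_singleton_le h]
        _ = span R {g} * (D * span R {g} ^ n) ⊔ D * span R {g} ^ n := by
            rw [Submodule.sup_mul, mul_assoc]
        _ ≤ P * (P * D) ⊔ P * D := by gcongr
        _ = P * D := by rw [← mul_assoc, hPP, sup_idem]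
  have hP_eq : P = ⨆ n : ℕ, span R {g} ^ n := by
    simp only [P, toSubmodule_adjoin_singleton, Submodule.span_range_eq_iSup,
      Submodule.span_pow, Set.singleton_pow]
  calc D * P = ⨆ n : ℕ, D * span R {g} ^ n := by rw [hP_eq, Submodule.mul_iSup]
    _ ≤ P * D := iSup_le pow_le

theorem toSubmodule_adjoin_insert_le_mul {g : A} {C : Set A}
    (h : ∀ c ∈ C, c * g ∈ span R {g} * toSubmodule (adjoin R C) ⊔ toSubmodule (adjoin R C)) :
    toSubmodule (adjoin R (insert g C)) ≤
      toSubmodule (adjoin R {g}) * toSubmodule (adjoin R C) := by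
  rw [Set.insert_eq, adjoin_union]
  exact toSubmodule_sup_le_mul (adjoin_mul_adjoin_singleton_le h)

theorem range_tail_eq_image_Ioi_zero {α : Type*} {n : ℕ} (g : Fin (n + 1) → α) :
    Set.range (Fin.tail g) = g '' Set.Ioi 0 := by
  have Ioi_zero : Set.Ioi (0 : Fin (n + 1)) = Set.range Fin.succ := by
    ext
    simp [Fin.pos_iff_ne_zero]
  rw [Ioi_zero, ← Set.range_comp, Fin.tail_def, Function.comp_def]

theorem image_tail_Ioi {α : Type*} {n : ℕ} (g : Fin (n + 1) → α) (i : Fin n) :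
    Fin.tail g '' Set.Ioi i = g '' Set.Ioi i.succ := by
  rw [← Fin.image_succ_Ioi, Set.image_image, Fin.tail_def]

theorem toSubmodule_adjoin_range_le_span_orderedMonomials {n : ℕ} (g : Fin n → A)
    (h : ∀ i j, i < j → g j * g i ∈ span R {g i} * toSubmodule (adjoin R (g '' Set.Ioi i)) ⊔
      toSubmodule (adjoin R (g '' Set.Ioi i))) :
    toSubmodule (adjoin R (Set.range g)) ≤
      span R (Set.range fun m : Fin n → ℕ ↦ (List.ofFn fun i ↦ g i ^ m i).prod) := by
  induction n with
  | zero => simp [Algebra.toSubmodule_bot, Submodule.one_eq_span]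
  | succ n ih =>
    have tail_le := ih (Fin.tail g) fun i j hij ↦ by
      rw [image_tail_Ioi]
      exact h i.succ j.succ (Fin.succ_lt_succ_iff.2 hij)
    have head_le := toSubmodule_adjoin_insert_le_mul (R := R) (g := g 0) (C := g '' Set.Ioi 0) (by
      rintro _ ⟨j, hj, rfl⟩
      exact h 0 j hj)
    rw [← range_tail_eq_image_Ioi_zero, toSubmodule_adjoin_singleton] at head_le
    grw [Fin.range_fin_succ, head_le, tail_le, Submodule.span_mul_span]
    refine Submodule.span_mono ?_
    rintro _ ⟨_, ⟨m₀, rfl⟩, _, ⟨m, rfl⟩, rfl⟩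
    exact ⟨Fin.cons m₀ m, by simp [List.ofFn_succ, Fin.tail]⟩

end Straightening

section SkewCommutator

variable {R A : Type*} [CommRing R] [Ring A] [Algebra R A]

/-- The braided commutator of `u` and `v`; the value `c` of the bicharacter at their degrees is an
explicit argument, so that the ambient algebra need not be graded. -/
def skewComm (c : R) (u v : A) : A :=
  u * v - c • (v * u)

theorem skewComm_eq_zero_iff {c : R} {u v : A} : skewComm c u v = 0 ↔ u * v = c • (v * u) :=
  sub_eq_zero

theorem skewComm_zero_right (c : R) (u : A) : skewComm c u 0 = 0 := by
  simp [skewComm]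

theorem skewComm_zero_left (c : R) (u : A) : skewComm c 0 u = 0 := by
  simp [skewComm]

theorem skewComm_smul_right (c r : R) (u v : A) :
    skewComm c u (r • v) = r • skewComm c u v := by
  simp [skewComm, smul_sub, smul_comm c r]

theorem skewComm_self (c : R) (u : A) : skewComm c u u = (1 - c) • u ^ 2 := by
  rw [skewComm, sub_smul, one_smul, sq]

theorem skewComm_mul_right {c d e : R} (he : e = c * d) (x u v : A) :
    skewComm e x (u * v) = skewComm c x u * v + c • (u * skewComm d x v) := by
  simp only [skewComm, he, sub_mul, mul_sub, smul_mul_assoc, mul_smul_comm, mul_assoc]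
  module

theorem skewComm_mul_left {c d e : R} (he : e = c * d) (u v y : A) :
    skewComm e (u * v) y = u * skewComm c v y + c • (skewComm d u y * v) := by
  simp only [skewComm, he, sub_mul, mul_sub, smul_mul_assoc, mul_smul_comm, mul_assoc]
  module

theorem skewComm_skewComm {c d e f g s : R} (he : e = c * f) (hg : g = c * d) (hs : s = e * d)
    (x u v : A) :
    skewComm g x (skewComm e u v) =
      skewComm s (skewComm c x u) v + c • skewComm f u (skewComm d x v) := by
  simp only [skewComm, he, hg, hs, sub_mul, mul_sub, smul_mul_assoc, mul_smul_comm, mul_assoc]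
  module

theorem mul_mem_of_skewComm_mem {D : Subalgebra R A} {c : R} {u v : A} (hu : u ∈ D)
    (huv : skewComm c u v ∈ D) :
    u * v ∈ Submodule.span R {v} * Subalgebra.toSubmodule D ⊔ Subalgebra.toSubmodule D := by
  rw [← add_sub_cancel (c • (v * u)) (u * v)]
  exact Submodule.add_mem_sup (Submodule.smul_mem _ c
    (Submodule.mul_mem_mul (Submodule.mem_span_singleton_self v) hu)) huv

theorem skewComm_eq_neg_smul {c d : R} (hcd : c * d = 1) (u v : A) :
    skewComm c u v = -c • skewComm d v u := by
  rw [skewComm, skewComm, neg_smul, smul_sub, smul_smul, hcd, one_smul, neg_sub]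

theorem skewComm_skewComm_right_eq_zero {c d : R} (hcd : c * d = 1) {u v : A}
    (h : skewComm d v (skewComm d v u) = 0) : skewComm c (skewComm c u v) v = 0 := by
  rw [skewComm_eq_neg_smul hcd (skewComm c u v), skewComm_eq_neg_smul hcd u, skewComm_smul_right, h,
    smul_zero, smul_zero]

/-- The root vectors of the two-generator algebra with braiding matrix `q₁₁ = q`, `q₁₂ = a`,
`q₂₂ = q₁₂ q₂₁ = 1`, that is `x₁₂ = (ad_c x₁) x₂`, `x₁₁₂ = (ad_c x₁)² x₂`, `x₁₁₁₂ = (ad_c x₁)³ x₂`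
and `x₁₁₁₂₂ = [x₁₁₂, x₁₂]_c`, subject to the quantum Serre relations. The relation
`(ad_c x₂)² x₁ = 0` appears in the equivalent form `[x₁₂, x₂]_c = 0`. -/
structure SerreRootVectors (q a : R) (x₁ x₂ x₁₂ x₁₁₂ x₁₁₁₂ x₁₁₁₂₂ : A) : Prop where
  skewComm_x₁_x₂ : skewComm a x₁ x₂ = x₁₂
  skewComm_x₁_x₁₂ : skewComm (q * a) x₁ x₁₂ = x₁₁₂
  skewComm_x₁_x₁₁₂ : skewComm (q ^ 2 * a) x₁ x₁₁₂ = x₁₁₁₂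
  skewComm_x₁_x₁₁₁₂ : skewComm a x₁ x₁₁₁₂ = 0
  skewComm_x₁₁₂_x₁₂ : skewComm (q ^ 2 * a) x₁₁₂ x₁₂ = x₁₁₁₂₂
  skewComm_x₁₂_x₂ : skewComm a x₁₂ x₂ = 0

namespace SerreRootVectors

variable {q a : R} {x₁ x₂ x₁₂ x₁₁₂ x₁₁₁₂ x₁₁₁₂₂ : A}
  (h : SerreRootVectors q a x₁ x₂ x₁₂ x₁₁₂ x₁₁₁₂ x₁₁₁₂₂) (hq : q ^ 2 + q + 1 = 0)

include h hq

theorem skewComm_x₁₁₂_x₂ :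
    skewComm (a ^ 2) x₁₁₂ x₂ = (a * (1 - q)) • x₁₂ ^ 2 := by
  have jacobi := skewComm_skewComm (c := q * a) (d := a) (e := a) (f := q ^ 2)
    (g := q * a ^ 2) (s := a ^ 2) (by grind) (by ring) (by ring) x₁ x₁₂ x₂
  rw [h.skewComm_x₁₂_x₂, skewComm_zero_right, h.skewComm_x₁_x₁₂, h.skewComm_x₁_x₂,
    skewComm_self] at jacobi
  linear_combination (norm := (match_scalars <;> grind)) -jacobi

theorem skewComm_x₁₁₁₂_x₂ :
    skewComm (a ^ 3) x₁₁₁₂ x₂ = (2 * a) • x₁₁₁₂₂ := by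
  have jacobi := skewComm_skewComm (c := q ^ 2 * a) (d := a) (e := a ^ 2) (f := q * a)
    (g := q ^ 2 * a ^ 2) (s := a ^ 3) (by grind) (by ring) (by ring) x₁ x₁₁₂ x₂
  rw [h.skewComm_x₁₁₂_x₂ hq, skewComm_smul_right, sq x₁₂,
    skewComm_mul_right (c := q * a) (d := q * a) (by ring), h.skewComm_x₁_x₁₂, h.skewComm_x₁_x₁₁₂,
    h.skewComm_x₁_x₂] at jacobi
  rw [← h.skewComm_x₁₁₂_x₁₂]
  simp only [skewComm] at jacobi ⊢
  linear_combination (norm := (match_scalars <;> grind)) -jacobi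

theorem skewComm_x₁_x₁₁₁₂₂_eq :
    skewComm (a ^ 2) x₁ x₁₁₁₂₂ = skewComm (a ^ 2) x₁₁₁₂ x₁₂ := by
  rw [← h.skewComm_x₁₁₂_x₁₂, skewComm_skewComm (c := q ^ 2 * a) (d := q * a) (f := 1) (s := a ^ 2)
    (by ring) (by grind) (by grind), h.skewComm_x₁_x₁₁₂, h.skewComm_x₁_x₁₂, skewComm_self]
  simp

theorem skewComm_x₁₁₁₂_x₁₂ (ha : IsUnit a) :
    skewComm (a ^ 2) x₁₁₁₂ x₁₂ = 0 := by
  have jacobi := skewComm_skewComm (c := a) (d := a) (e := a ^ 3) (f := a ^ 2)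
    (g := a ^ 2) (s := a ^ 4) (by ring) (by ring) (by ring) x₁ x₁₁₁₂ x₂
  rw [h.skewComm_x₁₁₁₂_x₂ hq, skewComm_smul_right, h.skewComm_x₁_x₁₁₁₂₂_eq hq,
    h.skewComm_x₁_x₁₁₁₂, h.skewComm_x₁_x₂, skewComm_zero_left, zero_add] at jacobi
  rw [← ha.smul_eq_zero]
  linear_combination (norm := module) jacobi

theorem skewComm_x₁_x₁₁₁₂₂ (ha : IsUnit a) :
    skewComm (a ^ 2) x₁ x₁₁₁₂₂ = 0 := by
  rw [h.skewComm_x₁_x₁₁₁₂₂_eq hq, h.skewComm_x₁₁₁₂_x₁₂ hq ha]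

theorem skewComm_x₁₁₁₂_x₁₁₂ (ha : IsUnit a) :
    skewComm a x₁₁₁₂ x₁₁₂ = 0 := by
  have jacobi := skewComm_skewComm (c := a) (d := q * a) (e := a ^ 2) (f := a)
    (g := q * a ^ 2) (s := q * a ^ 3) (by ring) (by ring) (by ring) x₁ x₁₁₁₂ x₁₂
  rw [h.skewComm_x₁₁₁₂_x₁₂ hq ha, h.skewComm_x₁_x₁₁₁₂, h.skewComm_x₁_x₁₂, skewComm_zero_left,
    skewComm_zero_right, zero_add] at jacobi
  exact ha.smul_eq_zero.1 jacobi.symm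

theorem skewComm_x₁₁₁₂_x₁₁₁₂₂ (ha : IsUnit a) :
    skewComm (a ^ 3) x₁₁₁₂ x₁₁₁₂₂ = 0 := by
  rw [← h.skewComm_x₁₁₂_x₁₂, skewComm_skewComm (c := a) (d := a ^ 2) (f := q ^ 2)
    (s := q ^ 2 * a ^ 3) (by ring) (by ring) (by ring), h.skewComm_x₁₁₁₂_x₁₁₂ hq ha,
    h.skewComm_x₁₁₁₂_x₁₂ hq ha, skewComm_zero_left, skewComm_zero_right, smul_zero, add_zero]

theorem skewComm_x₁₁₁₂₂_x₂ :
    skewComm (a ^ 3) x₁₁₁₂₂ x₂ = (3 * a ^ 2) • x₁₂ ^ 3 := by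
  have left : skewComm (a ^ 3) (x₁₁₂ * x₁₂) x₂ = (a ^ 2 * (1 - q)) • x₁₂ ^ 3 := by
    rw [skewComm_mul_left (c := a) (d := a ^ 2) (by ring), h.skewComm_x₁₂_x₂,
      h.skewComm_x₁₁₂_x₂ hq, mul_zero, zero_add, smul_mul_assoc, smul_smul, ← pow_succ]
    congr 1
    ring
  have right : skewComm (a ^ 3) (x₁₂ * x₁₁₂) x₂ = (a * (1 - q)) • x₁₂ ^ 3 := by
    rw [skewComm_mul_left (c := a ^ 2) (d := a) (by ring), h.skewComm_x₁₂_x₂,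
      h.skewComm_x₁₁₂_x₂ hq, zero_mul, smul_zero, add_zero, mul_smul_comm, ← pow_succ']
  have sub : skewComm (a ^ 3) x₁₁₁₂₂ x₂ = skewComm (a ^ 3) (x₁₁₂ * x₁₂) x₂ -
      (q ^ 2 * a) • skewComm (a ^ 3) (x₁₂ * x₁₁₂) x₂ := by
    rw [← h.skewComm_x₁₁₂_x₁₂]
    simp only [skewComm, sub_mul, mul_sub, smul_mul_assoc, mul_smul_comm]
    module
  rw [sub, left, right]
  match_scalars
  grind

theorem skewComm_x₁_x₁₂_cube :
    skewComm (a ^ 3) x₁ (x₁₂ ^ 3) = skewComm a x₁₁₁₂₂ x₁₂ := by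
  rw [pow_succ' x₁₂, sq x₁₂, skewComm_mul_right (c := q * a) (d := q ^ 2 * a ^ 2) (by grind),
    skewComm_mul_right (c := q * a) (d := q * a) (by ring), h.skewComm_x₁_x₁₂,
    ← h.skewComm_x₁₁₂_x₁₂]
  simp only [skewComm, sub_mul, mul_sub, mul_add, smul_mul_assoc, mul_smul_comm, mul_assoc]
  match_scalars <;> grind

theorem skewComm_x₁₁₁₂₂_x₁₂ (ha : IsUnit a) (h2 : IsUnit (2 : R)) :
    skewComm a x₁₁₁₂₂ x₁₂ = 0 := by
  have jacobi := skewComm_skewComm (c := a ^ 2) (d := a) (e := a ^ 3) (f := a)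
    (g := a ^ 3) (s := a ^ 4) (by ring) (by ring) (by ring) x₁ x₁₁₁₂₂ x₂
  rw [h.skewComm_x₁₁₁₂₂_x₂ hq, skewComm_smul_right, h.skewComm_x₁_x₁₂_cube hq,
    h.skewComm_x₁_x₁₁₁₂₂ hq ha, h.skewComm_x₁_x₂, skewComm_zero_left, zero_add] at jacobi
  rw [← (h2.mul (ha.pow 2)).smul_eq_zero]
  linear_combination (norm := module) jacobi

theorem skewComm_x₁₁₂_x₁₁₁₂₂ (ha : IsUnit a) (h2 : IsUnit (2 : R)) :
    skewComm a x₁₁₂ x₁₁₁₂₂ = 0 := by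
  have leibniz := congrArg (skewComm (q * a ^ 3) x₁)
    (skewComm_eq_zero_iff.1 (h.skewComm_x₁₁₁₂₂_x₁₂ hq ha h2))
  rw [skewComm_mul_right (c := a ^ 2) (d := q * a) (by ring), skewComm_smul_right,
    skewComm_mul_right (c := q * a) (d := a ^ 2) (by ring), h.skewComm_x₁_x₁₁₁₂₂ hq ha,
    h.skewComm_x₁_x₁₂, mul_zero, smul_zero, zero_mul, add_zero, zero_add] at leibniz
  rw [← ha.smul_eq_zero, skewComm]
  linear_combination (norm := module) -leibniz

theorem exists_skewComm_mem_adjoin_image_Ioi (ha : IsUnit a) (h2 : IsUnit (2 : R)) {g : Fin 6 → A}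
    (hg : g = ![x₂, x₁₂, x₁₁₁₂₂, x₁₁₂, x₁₁₁₂, x₁]) {i j : Fin 6} (hij : i < j) :
    ∃ c : R, skewComm c (g j) (g i) ∈ Algebra.adjoin R (g '' Set.Ioi i) := by
  subst hg
  set g := ![x₂, x₁₂, x₁₁₁₂₂, x₁₁₂, x₁₁₁₂, x₁]
  have mem_adjoin {i : Fin 6} (j : Fin 6) (hij : i < j) :
      g j ∈ Algebra.adjoin R (g '' Set.Ioi i) :=
    Algebra.subset_adjoin ⟨j, hij, rfl⟩
  have of_eq {i : Fin 6} {c : R} {u v w : A} (huv : skewComm c u v = w)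
      (hw : w ∈ Algebra.adjoin R (g '' Set.Ioi i)) :
      ∃ c : R, skewComm c u v ∈ Algebra.adjoin R (g '' Set.Ioi i) :=
    ⟨c, huv.symm ▸ hw⟩
  have mem_x₁₂ := mem_adjoin (i := 0) 1 (by decide)
  have mem_x₁₁₁₂₂ := mem_adjoin (i := 0) 2 (by decide)
  fin_cases i <;> fin_cases j <;> first | exact absurd hij (by decide) | skip
  · exact of_eq h.skewComm_x₁₂_x₂ (zero_mem _)
  · exact of_eq (h.skewComm_x₁₁₁₂₂_x₂ hq) (Subalgebra.smul_mem _ (pow_mem mem_x₁₂ 3) _)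
  · exact of_eq (h.skewComm_x₁₁₂_x₂ hq) (Subalgebra.smul_mem _ (pow_mem mem_x₁₂ 2) _)
  · exact of_eq (h.skewComm_x₁₁₁₂_x₂ hq) (Subalgebra.smul_mem _ mem_x₁₁₁₂₂ _)
  · exact of_eq h.skewComm_x₁_x₂ mem_x₁₂
  · exact of_eq (h.skewComm_x₁₁₁₂₂_x₁₂ hq ha h2) (zero_mem _)
  · exact of_eq h.skewComm_x₁₁₂_x₁₂ (mem_adjoin 2 (by decide))
  · exact of_eq (h.skewComm_x₁₁₁₂_x₁₂ hq ha) (zero_mem _)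
  · exact of_eq h.skewComm_x₁_x₁₂ (mem_adjoin 3 (by decide))
  · exact of_eq (h.skewComm_x₁₁₂_x₁₁₁₂₂ hq ha h2) (zero_mem _)
  · exact of_eq (h.skewComm_x₁₁₁₂_x₁₁₁₂₂ hq ha) (zero_mem _)
  · exact of_eq (h.skewComm_x₁_x₁₁₁₂₂ hq ha) (zero_mem _)
  · exact of_eq (h.skewComm_x₁₁₁₂_x₁₁₂ hq ha) (zero_mem _)
  · exact of_eq h.skewComm_x₁_x₁₁₂ (mem_adjoin 4 (by decide))
  · exact of_eq h.skewComm_x₁_x₁₁₁₂ (zero_mem _)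

theorem toSubmodule_adjoin_le_span_orderedMonomials (ha : IsUnit a) (h2 : IsUnit (2 : R)) :
    Subalgebra.toSubmodule (Algebra.adjoin R {x₁, x₂}) ≤
      Submodule.span R (Set.range fun n : Fin 6 → ℕ ↦
        x₂ ^ n 0 * x₁₂ ^ n 1 * x₁₁₁₂₂ ^ n 2 * x₁₁₂ ^ n 3 * x₁₁₁₂ ^ n 4 * x₁ ^ n 5) := by
  set g : Fin 6 → A := ![x₂, x₁₂, x₁₁₁₂₂, x₁₁₂, x₁₁₁₂, x₁] with hg
  calc Subalgebra.toSubmodule (Algebra.adjoin R {x₁, x₂})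
      ≤ Subalgebra.toSubmodule (Algebra.adjoin R (Set.range g)) := by
        refine Algebra.adjoin_mono ?_
        rintro _ (rfl | rfl)
        exacts [⟨5, rfl⟩, ⟨0, rfl⟩]
    _ ≤ _ := toSubmodule_adjoin_range_le_span_orderedMonomials g fun i j hij ↦
        let ⟨_, hc⟩ := h.exists_skewComm_mem_adjoin_image_Ioi hq ha h2 hg hij
        mul_mem_of_skewComm_mem (Algebra.subset_adjoin ⟨j, hij, rfl⟩) hc
    _ ≤ _ := by simp [List.ofFn_succ, g, mul_assoc]

end SerreRootVectors

end SkewCommutator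

section FreeAlgebra

variable {k A : Type*} [Field k] [Ring A] [Algebra k A]

theorem qb_apply {q a : k} (ha : a ≠ 0) (α β : Fin 2 → ℤ) :
    qb ![![q, a], ![a⁻¹, 1]] α β = q ^ (α 0 * β 0) * a ^ (α 0 * β 1 - α 1 * β 0) := by
  simp [qb, Fin.prod_univ_two, zpow_sub₀ ha, mul_assoc, div_eq_mul_inv]

theorem skewComm_map_eq_map_brk {Q : Fin 2 → Fin 2 → k} (π : FreeAlgebra k (Fin 2) →ₐ[k] A)
    {p r : FreeAlgebra k (Fin 2) × (Fin 2 → ℤ)} {c : k} (hc : qb Q p.2 r.2 = c) :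
    skewComm c (π p.1) (π r.1) = π (brk Q p r).1 := by
  simp [brk, skewComm, hc]

theorem adjoin_map_ι_eq_top {π : FreeAlgebra k (Fin 2) →ₐ[k] A} (hπ : Function.Surjective π) :
    Algebra.adjoin k {π (FreeAlgebra.ι k 0), π (FreeAlgebra.ι k 1)} = ⊤ := by
  have range_ι :
      Set.range (FreeAlgebra.ι k) = {FreeAlgebra.ι k 0, FreeAlgebra.ι k (1 : Fin 2)} := by
    ext
    simp [Fin.exists_fin_two, eq_comm]
  rw [← Set.image_pair, ← range_ι, ← AlgHom.map_adjoin, FreeAlgebra.adjoin_range_ι,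
    Algebra.map_top, (AlgHom.range_eq_top π).2 hπ]

theorem mkAlgHom_eq_zero {B : Type*} [Semiring B] [Algebra k B] {rel : B → B → Prop}
    {b : B} (h : rel b 0) :
    RingQuot.mkAlgHom k rel b = 0 := by
  rw [RingQuot.mkAlgHom_rel k h, map_zero]

theorem serreRootVectors_map {q a : k} (hq : q ^ 3 = 1) (ha : a ≠ 0)
    {Q : Fin 2 → Fin 2 → k} (hQ : Q = ![![q, a], ![a⁻¹, 1]]) {π : FreeAlgebra k (Fin 2) →ₐ[k] A}
    (serre₁ : π (brk Q (gen 0) (brk Q (gen 0) (brk Q (gen 0) (brk Q (gen 0) (gen 1))))).1 = 0)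
    (serre₂ : π (brk Q (gen 1) (brk Q (gen 1) (gen 0))).1 = 0) :
    SerreRootVectors q a (π (FreeAlgebra.ι k 0)) (π (FreeAlgebra.ι k 1))
      (π (brk Q (gen 0) (gen 1)).1)
      (π (brk Q (gen 0) (brk Q (gen 0) (gen 1))).1)
      (π (brk Q (gen 0) (brk Q (gen 0) (brk Q (gen 0) (gen 1)))).1)
      (π (brk Q (brk Q (gen 0) (brk Q (gen 0) (gen 1))) (brk Q (gen 0) (gen 1))).1) := by
  have ad {p r : FreeAlgebra k (Fin 2) × (Fin 2 → ℤ)} {c : k}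
      (hc : q ^ (p.2 0 * r.2 0) * a ^ (p.2 0 * r.2 1 - p.2 1 * r.2 0) = c) :
      skewComm c (π p.1) (π r.1) = π (brk Q p r).1 :=
    skewComm_map_eq_map_brk π (by rw [hQ, qb_apply ha, hc])
  have x₁_x₂ := ad (p := gen 0) (r := gen 1) (c := a) (by simp [gen, ee])
  have x₂_x₁ := ad (p := gen 1) (r := gen 0) (c := a⁻¹) (by simp [gen, ee])
  have x₂_x₂₁ := ad (p := gen 1) (r := brk Q (gen 1) (gen 0)) (c := a⁻¹) (by simp [brk, gen, ee])
  refine ⟨x₁_x₂, ad (p := gen 0) ?_, ad (p := gen 0) ?_, (ad (p := gen 0) ?_).trans serre₁,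
    ad ?_, ?_⟩
  · simp [brk, gen, ee]
  · simp [brk, gen, ee]
  · simp [brk, gen, ee, hq]
  · simp [brk, gen, ee]
  · rw [← x₂_x₁] at x₂_x₂₁
    rw [← x₁_x₂]
    exact skewComm_skewComm_right_eq_zero (mul_inv_cancel₀ ha) (x₂_x₂₁.trans serre₂)

theorem stmt6_general (q q12 : k) (hq : q ^ 2 + q + 1 = 0) (h2 : (2 : k) ≠ 0) (hq12 : q12 ≠ 0)
    (Q : Fin 2 → Fin 2 → k) (hQ : Q = ![![q, q12], ![q12⁻¹, 1]])
    (π : FreeAlgebra k (Fin 2) →ₐ[k] A) (hπ : Function.Surjective π)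
    (serre₁ : π (brk Q (gen 0) (brk Q (gen 0) (brk Q (gen 0) (brk Q (gen 0) (gen 1))))).1 = 0)
    (serre₂ : π (brk Q (gen 1) (brk Q (gen 1) (gen 0))).1 = 0) :
    ∀ b : A,
      b ∈ Submodule.span k (Set.range (fun n : Fin 6 → ℕ =>
        π (FreeAlgebra.ι k 1) ^ n 0
          * π (brk Q (gen 0) (gen 1)).1 ^ n 1
          * π (brk Q (brk Q (gen 0) (brk Q (gen 0) (gen 1))) (brk Q (gen 0) (gen 1))).1 ^ n 2
          * π (brk Q (gen 0) (brk Q (gen 0) (gen 1))).1 ^ n 3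
          * π (brk Q (gen 0) (brk Q (gen 0) (brk Q (gen 0) (gen 1)))).1 ^ n 4
          * π (FreeAlgebra.ι k 0) ^ n 5)) := by
  intro b
  have hq3 : q ^ 3 = 1 := by grind
  have rootVectors := serreRootVectors_map hq3 hq12 hQ serre₁ serre₂
  apply rootVectors.toSubmodule_adjoin_le_span_orderedMonomials hq hq12.isUnit h2.isUnit
  simp only [adjoin_map_ι_eq_top hπ, Algebra.top_toSubmodule, Submodule.mem_top]

end FreeAlgebra

/-- Let `q` be a primitive third root of unity and
`B = k⟨x_1,x_2⟩/⟨(ad_c x_1)^4 x_2, (ad_c x_2)^2 x_1⟩` with braiding matrix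
`q_11 = q, q_22 = 1, q_12 q_21 = 1` (`q_21 = q_12⁻¹`).  Then `B` is linearly spanned
by the monomials `x_2^{n_1} x_12^{n_2} x_11122^{n_3} x_112^{n_4} x_1112^{n_5} x_1^{n_6}`,
where `x_12 = (ad_c x_1)x_2`, `x_112 = (ad_c x_1)^2 x_2`, `x_1112 = (ad_c x_1)^3 x_2`
and `x_11122 = [x_112, x_12]_c`. -/
theorem stmt6 {k : Type*} [Field k] [CharZero k]
    (q q12 : k) (hq3 : q ^ 3 = 1) (hq1 : q ≠ 1) (hq12 : q12 ≠ 0)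
    (Q : Fin 2 → Fin 2 → k) (hQ : Q = ![![q, q12], ![q12⁻¹, 1]])
    (rel : FreeAlgebra k (Fin 2) → FreeAlgebra k (Fin 2) → Prop)
    (hrel : rel = fun a b => b = 0 ∧
      (a = (brk Q (gen 0) (brk Q (gen 0) (brk Q (gen 0) (brk Q (gen 0) (gen 1))))).1
        ∨ a = (brk Q (gen 1) (brk Q (gen 1) (gen 0))).1))
    (π : FreeAlgebra k (Fin 2) →ₐ[k] RingQuot rel) (hπ : π = RingQuot.mkAlgHom k rel) :
    ∀ b : RingQuot rel,
      b ∈ Submodule.span k (Set.range (fun n : Fin 6 → ℕ =>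
        π (FreeAlgebra.ι k 1) ^ n 0
          * π (brk Q (gen 0) (gen 1)).1 ^ n 1
          * π (brk Q (brk Q (gen 0) (brk Q (gen 0) (gen 1))) (brk Q (gen 0) (gen 1))).1 ^ n 2
          * π (brk Q (gen 0) (brk Q (gen 0) (gen 1))).1 ^ n 3
          * π (brk Q (gen 0) (brk Q (gen 0) (brk Q (gen 0) (gen 1)))).1 ^ n 4
          * π (FreeAlgebra.ι k 0) ^ n 5)) := by
  subst hrel hπ
  exact stmt6_general q q12 (mul_left_cancel₀ (sub_ne_zero.2 hq1) (by linear_combination hq3))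
    two_ne_zero hq12 Q hQ _ (RingQuot.mkAlgHom_surjective k _)
    (mkAlgHom_eq_zero ⟨rfl, .inl rfl⟩) (mkAlgHom_eq_zero ⟨rfl, .inr rfl⟩)

end
end

section
/- Let q be a primitive third root of unity and B as above (type G_2 q-Serre relations with q of order 3). Then GK-dim B = 6. -/
noncomputable section

namespace Stmt7

open scoped ENNReal

/-- The Gelfand–Kirillov dimension of a `k`-algebra `A`:
`GKdim = sup_S limsup_n log_n dim_k ((k + span S)^n)`, the supremum running over all
finite subsets `S` of `A`. -/
def GKdim (k A : Type*) [Field k] [Ring A] [Algebra k A] : ℝ≥0∞ :=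
  ⨆ S : Finset A,
    Filter.limsup
      (fun n : ℕ => ENNReal.ofReal (Real.logb n
        (Module.finrank k ((Submodule.span k (insert (1 : A) (S : Set A))) ^ n : Submodule k A))))
      Filter.atTop

variable {k : Type*} [Field k]

/-- The bicharacter on `ℤ²` extending a braiding matrix `Q`. -/
def qb (Q : Fin 2 → Fin 2 → k) (α β : Fin 2 → ℤ) : k :=
  ∏ a, ∏ b, Q a b ^ (α a * β b)

/-- Degree of the generator `x_a`. -/
def ee (a : Fin 2) : Fin 2 → ℤ := Pi.single a 1

/-- Braided commutator of two homogeneous elements carried with their degrees. -/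
def brk (Q : Fin 2 → Fin 2 → k) (p r : FreeAlgebra k (Fin 2) × (Fin 2 → ℤ)) :
    FreeAlgebra k (Fin 2) × (Fin 2 → ℤ) :=
  (p.1 * r.1 - qb Q p.2 r.2 • (r.1 * p.1), p.2 + r.2)

/-- The generator `x_a` together with its degree. -/
def gen (a : Fin 2) : FreeAlgebra k (Fin 2) × (Fin 2 → ℤ) :=
  (FreeAlgebra.ι k a, ee a)

end Stmt7

open Stmt7

/-!
Let `x, y` be the generators, of degrees `α, β`. The braided Jacobi identity turns the two Serre
relations into commutation rules between the root vectors `y, y₁, u, y₂, y₃, x`, one for each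
positive root of `G₂`. By these rules left multiplication by `x` raises the height of an ordered
monomial in the root vectors by at most one, so the words of length at most `N` span the same space
as the ordered monomials of height at most `N`. Ordered monomials are linearly independent: the
formulas for left multiplication on them define a representation on a space with basis `ℤ⁶`, which
is verified for `q₁₂ = 1` and carried to general `q₁₂` by twisting with a diagonal operator. Hence
the dimension grows like `N ^ 6`.
-/

namespace Stmt7

open Filter Topology Module Matrix

section Growth

theorem tendsto_logb_const_mul_pow {c : ℝ} (hc : 0 < c) (d : ℕ) :
    Tendsto (fun n : ℕ => ENNReal.ofReal (Real.logb n (c * n ^ d))) atTop (𝓝 d) := by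
  have h : Tendsto (fun n : ℕ => Real.log c / Real.log n + d) atTop (𝓝 d) := by
    simpa using (tendsto_const_nhds.div_atTop
      (Real.tendsto_log_atTop.comp tendsto_natCast_atTop_atTop)).add_const (d : ℝ)
  rw [← ENNReal.ofReal_natCast]
  refine ENNReal.tendsto_ofReal (h.congr' ?_)
  filter_upwards [eventually_ge_atTop 2] with n hn
  have hlog : Real.log n ≠ 0 := (Real.log_pos (Nat.one_lt_cast.2 hn)).ne'
  rw [Real.logb, Real.log_mul hc.ne' (by positivity), Real.log_pow]
  field_simp

theorem limsup_logb_le {f : ℕ → ℕ} {C : ℝ} {d : ℕ} (hC : 0 < C) (hf : ∀ n, 0 < f n)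
    (h : ∀ᶠ n in atTop, (f n : ℝ) ≤ C * n ^ d) :
    limsup (fun n : ℕ => ENNReal.ofReal (Real.logb n (f n))) atTop ≤ d := by
  rw [← (tendsto_logb_const_mul_pow hC d).limsup_eq]
  refine limsup_le_limsup ?_
  filter_upwards [h, eventually_ge_atTop 2] with n hfn hn
  exact ENNReal.ofReal_le_ofReal
    (Real.logb_le_logb_of_le (Nat.one_lt_cast.2 hn) (Nat.cast_pos.2 (hf n)) hfn)

theorem le_limsup_logb {f : ℕ → ℕ} {c : ℝ} {d : ℕ} (hc : 0 < c)
    (h : ∀ᶠ n in atTop, c * n ^ d ≤ f n) :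
    d ≤ limsup (fun n : ℕ => ENNReal.ofReal (Real.logb n (f n))) atTop := by
  rw [← (tendsto_logb_const_mul_pow hc d).limsup_eq]
  refine limsup_le_limsup ?_
  filter_upwards [h, eventually_ge_atTop 2] with n hfn hn
  exact ENNReal.ofReal_le_ofReal
    (Real.logb_le_logb_of_le (Nat.one_lt_cast.2 hn) (by positivity) hfn)

end Growth

section GKdim

variable {k A : Type*} [Field k] [Ring A] [Algebra k A]

theorem one_le_span_insert_one (S : Set A) : 1 ≤ Submodule.span k (insert 1 S) :=
  Submodule.one_le.2 (Submodule.subset_span (Set.mem_insert 1 S))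

theorem exists_mem_span_insert_one_pow {S : Set A} (hS : Algebra.adjoin k S = ⊤) (a : A) :
    ∃ m, a ∈ Submodule.span k (insert 1 S) ^ m := by
  have hmono {m n : ℕ} := pow_le_pow_right' (n := m) (m := n) (one_le_span_insert_one (k := k) S)
  have ha : a ∈ Algebra.adjoin k S := hS ▸ Algebra.mem_top
  induction ha using Algebra.adjoin_induction with
  | mem a ha => exact ⟨1, by rw [pow_one]; exact Submodule.subset_span (.inr ha)⟩
  | algebraMap r => exact ⟨0, by rw [pow_zero]; exact Submodule.algebraMap_mem r⟩
  | add a b _ _ iha ihb =>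
    obtain ⟨m, hm⟩ := iha
    obtain ⟨n, hn⟩ := ihb
    exact ⟨m + n, add_mem (hmono (by omega) hm) (hmono (by omega) hn)⟩
  | mul a b _ _ iha ihb =>
    obtain ⟨m, hm⟩ := iha
    obtain ⟨n, hn⟩ := ihb
    exact ⟨m + n, by rw [pow_add]; exact Submodule.mul_mem_mul hm hn⟩

theorem exists_span_insert_one_le_pow {S : Set A} (hS : Algebra.adjoin k S = ⊤) (T : Finset A) :
    ∃ m, Submodule.span k (insert 1 (T : Set A)) ≤ Submodule.span k (insert 1 S) ^ m := by
  have h1 := one_le_span_insert_one (k := k) S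
  choose f hf using exists_mem_span_insert_one_pow hS
  refine ⟨T.sup f, Submodule.span_le.2 (Set.insert_subset ?_ fun a ha => ?_)⟩
  · exact Submodule.one_le.1 (one_le_pow_of_one_le' h1 _)
  · exact pow_le_pow_right' h1 (Finset.le_sup ha) (hf a)

theorem finite_span_insert_one_pow (S : Finset A) (n : ℕ) :
    Module.Finite k (Submodule.span k (insert 1 (S : Set A)) ^ n : Submodule k A) :=
  Module.Finite.iff_fg.2 ((Submodule.fg_span (S.finite_toSet.insert 1)).pow n)

theorem finrank_span_insert_one_pow_pos [Nontrivial A] (S : Finset A) (n : ℕ) :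
    0 < finrank k (Submodule.span k (insert 1 (S : Set A)) ^ n : Submodule k A) := by
  have := finite_span_insert_one_pow (k := k) S n
  have h1 := Submodule.one_le.1
    (one_le_pow_of_one_le' (one_le_span_insert_one (k := k) (S : Set A)) n)
  exact finrank_pos_iff_exists_ne_zero.2 ⟨⟨1, h1⟩, Subtype.coe_ne_coe.1 one_ne_zero⟩

theorem GKdim_le_of_finrank_pow_le [Nontrivial A] {S : Finset A}
    (hS : Algebra.adjoin k (S : Set A) = ⊤) {C : ℝ} {d : ℕ} (hC : 0 < C)
    (h : ∀ n : ℕ, 0 < n →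
      (finrank k (Submodule.span k (insert 1 (S : Set A)) ^ n : Submodule k A) : ℝ) ≤ C * n ^ d) :
    GKdim k A ≤ d := by
  refine iSup_le fun T => ?_
  obtain ⟨m, hm⟩ := exists_span_insert_one_le_pow hS T
  have hpow : ∀ n, Submodule.span k (insert 1 (T : Set A)) ^ n ≤
      Submodule.span k (insert 1 (S : Set A)) ^ ((m + 1) * n) := fun n => by
    rw [pow_mul]
    exact pow_le_pow_left'
      (hm.trans (pow_le_pow_right' (one_le_span_insert_one _) m.le_succ)) n
  refine limsup_logb_le (C := C * (m + 1) ^ d) (by positivity)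
    (finrank_span_insert_one_pow_pos T) ?_
  filter_upwards [eventually_gt_atTop 0] with n hn
  have := finite_span_insert_one_pow (k := k) S ((m + 1) * n)
  calc (finrank k (Submodule.span k (insert 1 (T : Set A)) ^ n : Submodule k A) : ℝ)
      ≤ C * ((m + 1) * n : ℕ) ^ d :=
        (Nat.cast_le.2 (Submodule.finrank_mono (hpow n))).trans (h _ (by positivity))
    _ = C * (m + 1) ^ d * n ^ d := by rw [Nat.cast_mul, mul_pow]; push_cast; ring

theorem le_GKdim_of_le_finrank_pow (S : Finset A) {c : ℝ} {d : ℕ} (hc : 0 < c)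
    (h : ∀ n : ℕ, c * n ^ d ≤
      finrank k (Submodule.span k (insert 1 (S : Set A)) ^ n : Submodule k A)) :
    d ≤ GKdim k A :=
  (le_limsup_logb hc (.of_forall h)).trans (le_iSup (fun S : Finset A => limsup (fun n : ℕ =>
    ENNReal.ofReal (Real.logb n
      (finrank k (Submodule.span k (insert 1 (S : Set A)) ^ n : Submodule k A)))) atTop) S)

end GKdim

section SkewCommutator

variable {k A : Type*} [Field k] [Ring A] [Algebra k A]

/-- The skew commutator `x * z - c • (z * x)`: the braided commutator of homogeneous elements
whose degrees pair to `c` under the bicharacter. -/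
def skewComm (c : k) : A →ₗ[k] A →ₗ[k] A :=
  LinearMap.mul k A - c • (LinearMap.mul k A).flip

theorem skewComm_apply (c : k) (x z : A) : skewComm c x z = x * z - c • (z * x) := rfl

theorem mul_eq_smul_add_skewComm (c : k) (x z : A) : x * z = c • (z * x) + skewComm c x z := by
  rw [skewComm_apply, add_sub_cancel]

theorem map_skewComm {B : Type*} [Ring B] [Algebra k B] (f : A →ₐ[k] B) (c : k) (x z : A) :
    f (skewComm c x z) = skewComm c (f x) (f z) := by
  simp only [skewComm_apply, map_sub, map_smul, map_mul]

theorem skewComm_inv_swap {c : k} (hc : c ≠ 0) (x z : A) :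
    skewComm c⁻¹ z x = -c⁻¹ • skewComm c x z := by
  rw [skewComm_apply, skewComm_apply, smul_sub, smul_smul, neg_mul, inv_mul_cancel₀ hc]
  module

theorem skewComm_mul (c d : k) (x y z : A) :
    skewComm (c * d) x (y * z) = skewComm c x y * z + c • (y * skewComm d x z) := by
  simp only [skewComm_apply, mul_sub, sub_mul, mul_smul_comm, smul_mul_assoc, mul_assoc]
  module

theorem skewComm_jacobi (c d e : k) (x y z : A) :
    skewComm (d * e) x (skewComm (d * c) y z) =
      skewComm (d * c * e) (skewComm d x y) z + d • skewComm c y (skewComm e x z) := by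
  simp only [skewComm_apply, mul_sub, sub_mul, mul_smul_comm, smul_mul_assoc, mul_assoc]
  module

end SkewCommutator

section OrderedMonomial

variable {k A : Type*} [Field k] [Ring A] [Algebra k A] {d : ℕ}

/-- The ordered monomial `g 0 ^ e 0 * ⋯ * g (d - 1) ^ e (d - 1)`, as in a basis of
Poincaré–Birkhoff–Witt type. -/
def orderedMonomial {A : Type*} [Monoid A] (g : Fin d → A) (e : Fin d → ℕ) : A :=
  (List.ofFn fun i => g i ^ e i).prod

theorem orderedMonomial_cons {A : Type*} [Monoid A] (g₀ : A) (g : Fin d → A) (n : ℕ)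
    (e : Fin d → ℕ) :
    orderedMonomial (vecCons g₀ g) (vecCons n e) = g₀ ^ n * orderedMonomial g e := by
  simp [orderedMonomial, List.ofFn_succ]

theorem map_orderedMonomial {A B : Type*} [Monoid A] [Monoid B] (f : A →* B) (g : Fin d → A)
    (e : Fin d → ℕ) : f (orderedMonomial g e) = orderedMonomial (f ∘ g) e := by
  simp [orderedMonomial, map_list_prod, List.map_ofFn, Function.comp_def]

theorem orderedMonomial_mem_pow {V : Submodule k A} {g : Fin d → A} {w : Fin d → ℕ}
    (hg : ∀ i, g i ∈ V ^ w i) (e : Fin d → ℕ) : orderedMonomial g e ∈ V ^ (w ⬝ᵥ e) := by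
  induction d with
  | zero => simp [orderedMonomial, Submodule.one_le.1 le_rfl]
  | succ d ih =>
    rw [orderedMonomial, List.ofFn_succ, List.prod_cons, dotProduct, Fin.sum_univ_succ, pow_add,
      pow_mul]
    exact Submodule.mul_mem_mul (Submodule.pow_mem_pow _ (hg 0) _) (ih (fun i => hg i.succ) _)

/-- The span of the ordered monomials in `g` of weighted degree at most `N`, where `g i` has
weight `w i`. -/
def monomialSpan (k : Type*) {A : Type*} [Field k] [Ring A] [Algebra k A] (g : Fin d → A)
    (w : Fin d → ℕ) (N : ℕ) : Submodule k A :=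
  Submodule.span k (orderedMonomial g '' {e | w ⬝ᵥ e ≤ N})

theorem orderedMonomial_mem_monomialSpan (g : Fin d → A) {w e : Fin d → ℕ} {N : ℕ}
    (h : w ⬝ᵥ e ≤ N) : orderedMonomial g e ∈ monomialSpan k g w N :=
  Submodule.subset_span (Set.mem_image_of_mem _ h)

theorem monomialSpan_mono (g : Fin d → A) (w : Fin d → ℕ) : Monotone (monomialSpan k g w) :=
  fun _ _ hN => Submodule.span_mono (Set.image_mono fun _ he => le_trans he hN)

theorem monomialSpan_le_monomialSpan_cons (g₀ : A) (g : Fin d → A) (w₀ : ℕ) (w : Fin d → ℕ)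
    (N : ℕ) : monomialSpan k g w N ≤ monomialSpan k (vecCons g₀ g) (vecCons w₀ w) N := by
  refine Submodule.span_le.2 ?_
  rintro _ ⟨e, he, rfl⟩
  rw [← one_mul (orderedMonomial g e), ← pow_zero g₀, ← orderedMonomial_cons]
  exact orderedMonomial_mem_monomialSpan _ (by simpa using he)

theorem monomialSpan_le_span_box {w : Fin d → ℕ} (hw : ∀ i, 0 < w i) (g : Fin d → A) (N : ℕ) :
    monomialSpan k g w N ≤ Submodule.span k
      (Set.range fun e : Fin d → Fin (N + 1) => orderedMonomial g fun i => e i) := by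
  refine Submodule.span_mono ?_
  rintro _ ⟨e, he, rfl⟩
  have hle : ∀ i, e i < N + 1 := fun i => Nat.lt_succ_of_le <|
    calc e i ≤ w i * e i := Nat.le_mul_of_pos_left _ (hw i)
      _ ≤ w ⬝ᵥ e := Finset.single_le_sum (f := fun i => w i * e i) (by simp) (Finset.mem_univ i)
      _ ≤ N := he
  exact ⟨fun i => ⟨e i, hle i⟩, rfl⟩

theorem finite_monomialSpan {w : Fin d → ℕ} (hw : ∀ i, 0 < w i) (g : Fin d → A) (N : ℕ) :
    Module.Finite k (monomialSpan k g w N) :=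
  have := Module.Finite.span_of_finite k
    (Set.finite_range fun e : Fin d → Fin (N + 1) => orderedMonomial g fun i => e i)
  Submodule.finiteDimensional_of_le (monomialSpan_le_span_box hw g N)

theorem finrank_monomialSpan_le {w : Fin d → ℕ} (hw : ∀ i, 0 < w i) (g : Fin d → A) (N : ℕ) :
    finrank k (monomialSpan k g w N) ≤ (N + 1) ^ d := by
  have := Module.Finite.span_of_finite k
    (Set.finite_range fun e : Fin d → Fin (N + 1) => orderedMonomial g fun i => e i)
  refine (Submodule.finrank_mono (monomialSpan_le_span_box hw g N)).trans ?_
  refine (finrank_range_le_card (R := k)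
    fun e : Fin d → Fin (N + 1) => orderedMonomial g fun i => e i).trans ?_
  simp

theorem le_finrank_monomialSpan {w : Fin d → ℕ} (hw : ∀ i, 0 < w i) {g : Fin d → A}
    (hg : LinearIndependent k (orderedMonomial g)) {t N : ℕ} (ht : (∑ i, w i) * t ≤ N) :
    (t + 1) ^ d ≤ finrank k (monomialSpan k g w N) := by
  have := finite_monomialSpan (k := k) hw g N
  have hinj : Function.Injective fun (e : Fin d → Fin (t + 1)) (i : Fin d) => (e i : ℕ) :=
    fun _ _ h => funext fun i => Fin.ext (congrFun h i)
  have hbox : Submodule.span k (Set.range (orderedMonomial g ∘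
      fun (e : Fin d → Fin (t + 1)) (i : Fin d) => (e i : ℕ))) ≤ monomialSpan k g w N := by
    refine Submodule.span_le.2 ?_
    rintro _ ⟨e, rfl⟩
    refine orderedMonomial_mem_monomialSpan g ?_
    calc ∑ i, w i * (e i : ℕ)
        ≤ ∑ i, w i * t := Finset.sum_le_sum fun i _ => Nat.mul_le_mul_left _ (Fin.is_le _)
      _ = (∑ i, w i) * t := (Finset.sum_mul ..).symm
      _ ≤ N := ht
  simpa [finrank_span_eq_card (hg.comp _ hinj)] using Submodule.finrank_mono hbox

/-- Left multiplication by `a` raises degrees by at most `n` in the filtration `M`. -/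
def RaisesDegree (M : ℕ → Submodule k A) (a : A) (n : ℕ) : Prop :=
  ∀ ⦃N x⦄, x ∈ M N → a * x ∈ M (N + n)

namespace RaisesDegree

theorem zero (M : ℕ → Submodule k A) (n : ℕ) : RaisesDegree M 0 n := fun N x _ => by
  rw [zero_mul]
  exact zero_mem _

theorem of_orderedMonomial {g : Fin d → A} {w : Fin d → ℕ} {a : A} {n : ℕ}
    (h : ∀ e, a * orderedMonomial g e ∈ monomialSpan k g w (w ⬝ᵥ e + n)) :
    RaisesDegree (monomialSpan k g w) a n := fun N x hx => by
  suffices monomialSpan k g w N ≤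
    (monomialSpan k g w (N + n)).comap (LinearMap.mulLeft k a) from this hx
  refine Submodule.span_le.2 ?_
  rintro _ ⟨e, he, rfl⟩
  exact monomialSpan_mono g w (Nat.add_le_add_right he n) (h e)

theorem cons_self (g₀ : A) (g : Fin d → A) (w₀ : ℕ) (w : Fin d → ℕ) :
    RaisesDegree (monomialSpan k (vecCons g₀ g) (vecCons w₀ w)) g₀ w₀ := by
  refine of_orderedMonomial fun e => ?_
  obtain ⟨n, e, rfl⟩ : ∃ n e', e = vecCons n e' := ⟨_, _, (cons_head_tail e).symm⟩
  rw [orderedMonomial_cons, ← mul_assoc, ← pow_succ', ← orderedMonomial_cons]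
  refine orderedMonomial_mem_monomialSpan _ (le_of_eq ?_)
  simp only [cons_dotProduct_cons]
  ring

-- The analogue of extending a module over `k⟨g⟩` along the Ore extension by `g₀`.
theorem cons {g₀ a z : A} {g : Fin d → A} {w₀ n : ℕ} {w : Fin d → ℕ} {c : k}
    (ha : RaisesDegree (monomialSpan k g w) a n)
    (hz : RaisesDegree (monomialSpan k (vecCons g₀ g) (vecCons w₀ w)) z (n + w₀))
    (hcomm : skewComm c a g₀ = z) :
    RaisesDegree (monomialSpan k (vecCons g₀ g) (vecCons w₀ w)) a n := by
  refine of_orderedMonomial fun e => ?_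
  obtain ⟨m, e, rfl⟩ : ∃ m e', e = vecCons m e' := ⟨_, _, (cons_head_tail e).symm⟩
  rw [orderedMonomial_cons, cons_dotProduct_cons]
  induction m with
  | zero =>
    rw [pow_zero, one_mul, mul_zero, zero_add]
    exact monomialSpan_le_monomialSpan_cons g₀ g w₀ w _
      (ha (orderedMonomial_mem_monomialSpan g le_rfl))
  | succ m ih =>
    set y := g₀ ^ m * orderedMonomial g e with hy
    have hsplit : a * (g₀ ^ (m + 1) * orderedMonomial g e) =
        c • (g₀ * (a * y)) + z * y := by
      rw [pow_succ', mul_assoc, ← hy, ← mul_assoc, mul_eq_smul_add_skewComm c a g₀, hcomm,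
        add_mul, smul_mul_assoc, mul_assoc]
    have hy_mem : y ∈ monomialSpan k (vecCons g₀ g) (vecCons w₀ w) (w₀ * m + w ⬝ᵥ e) := by
      rw [hy, ← orderedMonomial_cons]
      exact orderedMonomial_mem_monomialSpan _ (by simp)
    rw [hsplit, show w₀ * (m + 1) + w ⬝ᵥ e + n = w₀ * m + w ⬝ᵥ e + (n + w₀) by ring]
    exact add_mem (Submodule.smul_mem _ c (add_assoc _ n w₀ ▸ cons_self g₀ g w₀ w ih))
      (hz hy_mem)

theorem cons_of_skewComm_eq_zero {g₀ a : A} {g : Fin d → A} {w₀ n : ℕ} {w : Fin d → ℕ} {c : k}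
    (ha : RaisesDegree (monomialSpan k g w) a n) (hcomm : skewComm c a g₀ = 0) :
    RaisesDegree (monomialSpan k (vecCons g₀ g) (vecCons w₀ w)) a n :=
  ha.cons (zero _ _) hcomm

end RaisesDegree

theorem span_insert_one_pow_le_monomialSpan {S : Set A} {g : Fin d → A} {w : Fin d → ℕ}
    (hS : ∀ s ∈ S, RaisesDegree (monomialSpan k g w) s 1) (N : ℕ) :
    Submodule.span k (insert 1 S) ^ N ≤ monomialSpan k g w N := by
  induction N with
  | zero =>
    rw [pow_zero, Submodule.one_le]
    simpa [orderedMonomial] using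
      orderedMonomial_mem_monomialSpan (k := k) (N := 0) g (dotProduct_zero w).le
  | succ N ih =>
    rw [pow_succ']
    refine (mul_le_mul_right ih _).trans ?_
    refine Submodule.mul_le.2 fun v hv x hx => ?_
    induction hv using Submodule.span_induction with
    | mem v hv =>
      rcases hv with rfl | hv
      · rw [one_mul]
        exact monomialSpan_mono g w N.le_succ hx
      · exact hS v hv hx
    | zero => rw [zero_mul]; exact zero_mem _
    | add v v' _ _ ihv ihv' => rw [add_mul]; exact add_mem ihv ihv'
    | smul c v _ ihv => rw [smul_mul_assoc]; exact Submodule.smul_mem _ c ihv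

theorem span_insert_one_pow_eq_monomialSpan {S : Set A} {g : Fin d → A} {w : Fin d → ℕ}
    (hS : ∀ s ∈ S, RaisesDegree (monomialSpan k g w) s 1)
    (hg : ∀ i, g i ∈ Submodule.span k (insert 1 S) ^ w i) (N : ℕ) :
    Submodule.span k (insert 1 S) ^ N = monomialSpan k g w N := by
  refine (span_insert_one_pow_le_monomialSpan hS N).antisymm (Submodule.span_le.2 ?_)
  rintro _ ⟨e, he, rfl⟩
  exact pow_le_pow_right' (one_le_span_insert_one S) he (orderedMonomial_mem_pow hg e)

theorem GKdim_eq_of_linearIndependent_orderedMonomial {S : Finset A}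
    (hadjoin : Algebra.adjoin k (S : Set A) = ⊤) {g : Fin d → A} {w : Fin d → ℕ}
    (hw : ∀ i, 0 < w i) (hS : ∀ s ∈ S, RaisesDegree (monomialSpan k g w) s 1)
    (hg : ∀ i, g i ∈ Submodule.span k (insert 1 (S : Set A)) ^ w i)
    (hli : LinearIndependent k (orderedMonomial g)) :
    GKdim k A = d := by
  have : Nontrivial A := ⟨⟨_, _, hli.ne_zero 0⟩⟩
  have hV := span_insert_one_pow_eq_monomialSpan hS hg
  refine le_antisymm ?_ ?_
  · refine GKdim_le_of_finrank_pow_le hadjoin (C := 2 ^ d) (by positivity) fun n hn => ?_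
    rw [hV, ← mul_pow]
    have hn2 : n + 1 ≤ 2 * n := by omega
    exact_mod_cast (finrank_monomialSpan_le hw g n).trans (Nat.pow_le_pow_left hn2 d)
  · set W := ∑ i, w i
    refine le_GKdim_of_le_finrank_pow S (c := ((W + 1 : ℕ) : ℝ)⁻¹ ^ d) (by positivity) fun n => ?_
    have hn : (((W + 1 : ℕ) : ℝ)⁻¹ * n) ≤ (n / (W + 1) + 1 : ℕ) := by
      rw [inv_mul_le_iff₀ (by positivity)]
      exact_mod_cast (Nat.lt_mul_div_succ n W.succ_pos).le
    have ht : W * (n / (W + 1)) ≤ n :=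
      (Nat.mul_le_mul_right _ W.le_succ).trans (Nat.mul_div_le n _)
    rw [hV, ← mul_pow]
    exact (pow_le_pow_left₀ (by positivity) hn d).trans
      (mod_cast le_finrank_monomialSpan hw hli ht)

end OrderedMonomial

section Independence

variable {k M : Type*} [Field k] [AddCommGroup M] [Module k M] {d : ℕ}

theorem exists_pow_apply_eq_smul {f : Module.End k M} {v : ℕ → M}
    (hf : ∀ n, ∃ c : k, c ≠ 0 ∧ f (v n) = c • v (n + 1)) (n : ℕ) :
    ∃ c : k, c ≠ 0 ∧ (f ^ n) (v 0) = c • v n := by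
  induction n with
  | zero => exact ⟨1, one_ne_zero, by rw [pow_zero, Module.End.one_apply, one_smul]⟩
  | succ n ih =>
    obtain ⟨c, hc, hn⟩ := ih
    obtain ⟨c', hc', hn'⟩ := hf n
    exact ⟨c * c', mul_ne_zero hc hc', by
      rw [pow_succ', Module.End.mul_apply, hn, map_smul, hn', smul_smul]⟩

theorem exists_orderedMonomial_apply_eq_smul {g : Fin d → Module.End k M} {v : (Fin d → ℕ) → M}
    (hg : ∀ i e, (∀ j < i, e j = 0) → ∃ c : k, c ≠ 0 ∧ g i (v e) = c • v (e + Pi.single i 1))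
    (e : Fin d → ℕ) : ∃ c : k, c ≠ 0 ∧ orderedMonomial g e (v 0) = c • v e := by
  induction d with
  | zero => exact ⟨1, one_ne_zero, by simp [orderedMonomial, Subsingleton.elim e 0]⟩
  | succ d ih =>
    obtain ⟨c, hc, hce⟩ := ih (g := vecTail g) (v := fun e => v (vecCons 0 e))
      (fun i e he => by
        have hcons : vecCons 0 (e + Pi.single i 1) = vecCons 0 e + Pi.single i.succ 1 := by
          ext j
          cases j using Fin.cases <;> simp [Pi.single_apply]
        rw [hcons]
        refine hg i.succ _ fun j hj => ?_
        cases j using Fin.cases with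
        | zero => rfl
        | succ j => exact he j (Fin.succ_lt_succ_iff.mp hj))
      (vecTail e)
    obtain ⟨c', hc', hce'⟩ := exists_pow_apply_eq_smul (f := vecHead g)
      (v := fun n => v (vecCons n (vecTail e)))
      (fun n => by
        have hcons : vecCons (n + 1) (vecTail e) = vecCons n (vecTail e) + Pi.single 0 1 := by
          ext j
          cases j using Fin.cases <;> simp
        rw [hcons]
        exact hg 0 _ fun j hj => absurd hj (Fin.not_lt_zero j))
      (vecHead e)
    refine ⟨c * c', mul_ne_zero hc hc', ?_⟩
    calc orderedMonomial g e (v 0)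
        = (vecHead g ^ vecHead e) (orderedMonomial (vecTail g) (vecTail e) (v (vecCons 0 0))) := by
          rw [cons_zero_zero, ← Module.End.mul_apply, ← orderedMonomial_cons, cons_head_tail,
            cons_head_tail]
      _ = (c * c') • v e := by rw [hce, map_smul, hce', smul_smul, cons_head_tail]

theorem linearIndependent_orderedMonomial {g : Fin d → Module.End k M} {v : (Fin d → ℕ) → M}
    (hv : LinearIndependent k v)
    (hg : ∀ i e, (∀ j < i, e j = 0) → ∃ c : k, c ≠ 0 ∧ g i (v e) = c • v (e + Pi.single i 1)) :
    LinearIndependent k (orderedMonomial g) := by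
  choose c hc hcv using exists_orderedMonomial_apply_eq_smul hg
  refine LinearIndependent.of_comp (LinearMap.applyₗ (v 0)) ?_
  convert hv.units_smul fun e => Units.mk0 (c e) (hc e) using 1
  exact funext hcv

end Independence

section SerrePair

variable {k A : Type*} [Field k] [Ring A] [Algebra k A] {q p : k} {x y : A}

/-- The iterated braided commutator `(ad_c x)^n y`, where `q` is the braiding constant of `x` with
itself and `p` that of `x` with `y`. -/
def adPow (q p : k) (x y : A) : ℕ → A
  | 0 => y
  | n + 1 => skewComm (q ^ n * p) x (adPow q p x y n)

theorem adPow_zero (q p : k) (x y : A) : adPow q p x y 0 = y := rfl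

theorem adPow_succ (q p : k) (x y : A) (n : ℕ) :
    adPow q p x y (n + 1) = skewComm (q ^ n * p) x (adPow q p x y n) := rfl

theorem adPow_one_eq (q p : k) (x y : A) : adPow q p x y 1 = skewComm p x y := by
  rw [adPow, pow_zero, one_mul, adPow]

theorem adPow_two_eq (q p : k) (x y : A) :
    adPow q p x y 2 = skewComm (q * p) x (adPow q p x y 1) := by
  rw [adPow, pow_one]

theorem adPow_three_eq (q p : k) (x y : A) :
    adPow q p x y 3 = skewComm (q ^ 2 * p) x (adPow q p x y 2) := rfl

theorem map_adPow {B : Type*} [Ring B] [Algebra k B] (f : A →ₐ[k] B) (q p : k) (x y : A) (n : ℕ) :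
    f (adPow q p x y n) = adPow q p (f x) (f y) n := by
  induction n with
  | zero => rfl
  | succ n ih => rw [adPow_succ, map_skewComm, ih, adPow_succ]

/-- The `q`-Serre relations of type `G₂` for a short root vector `x` and a long root vector `y`,
with braiding matrix `!![q, p; p⁻¹, 1]`. -/
structure IsSerrePair (q p : k) (x y : A) : Prop where
  adPow_four : adPow q p x y 4 = 0
  adPow_two : adPow 1 p⁻¹ y x 2 = 0

/-- The root vector of degree `3α + 2β`, where `x` has degree `α` and `y` has degree `β`. -/
def highestRootVector (q p : k) (x y : A) : A :=
  skewComm (q ^ 2 * p) (adPow q p x y 2) (adPow q p x y 1)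

theorem map_highestRootVector {B : Type*} [Ring B] [Algebra k B] (f : A →ₐ[k] B) (q p : k)
    (x y : A) : f (highestRootVector q p x y) = highestRootVector q p (f x) (f y) := by
  simp only [highestRootVector, map_skewComm, map_adPow]

/-- The root vectors of the Serre pair `x, y`, in a convex order of the positive roots
`β, α + β, 3α + 2β, 2α + β, 3α + β, α`, where `x` has degree `α` and `y` has degree `β`. -/
def rootVector (q p : k) (x y : A) : Fin 6 → A :=
  ![y, adPow q p x y 1, highestRootVector q p x y, adPow q p x y 2, adPow q p x y 3, x]

/-- The heights of the positive roots, in the order of `rootVector`. -/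
def rootHeight : Fin 6 → ℕ := ![1, 2, 5, 3, 4, 1]

theorem map_comp_rootVector {B : Type*} [Ring B] [Algebra k B] (f : A →ₐ[k] B) (q p : k)
    (x y : A) : f ∘ rootVector q p x y = rootVector q p (f x) (f y) := by
  ext i
  fin_cases i <;> simp [rootVector, map_adPow, map_highestRootVector]

theorem pow_three_eq_one (hq : q ^ 2 + q + 1 = 0) : q ^ 3 = 1 := by
  linear_combination (q - 1) * hq

theorem adPow_inv_two_eq_zero_iff (hp : p ≠ 0) :
    adPow 1 p⁻¹ y x 2 = 0 ↔ skewComm p (adPow q p x y 1) y = 0 := by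
  simp only [adPow, one_pow, one_mul, pow_zero, skewComm_inv_swap hp, map_smul,
    LinearMap.smul_apply, smul_smul]
  exact smul_eq_zero_iff_right (mul_ne_zero (by simpa using hp) (by simpa using hp))

theorem skewComm_left_highestRootVector_eq (hq : q ^ 3 = 1) (p : k) (x y : A) :
    skewComm (p ^ 2) x (highestRootVector q p x y) =
      skewComm (p ^ 2) (adPow q p x y 3) (adPow q p x y 1) := by
  have jacobi := skewComm_jacobi 1 (q ^ 2 * p) (q * p) x (adPow q p x y 2) (adPow q p x y 1)
  rwa [← adPow_two_eq, ← adPow_three_eq, skewComm_apply 1, one_smul, sub_self, smul_zero,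
    add_zero, mul_one, show q ^ 2 * p * (q * p) = p ^ 2 by linear_combination p ^ 2 * hq] at jacobi

namespace IsSerrePair

local notation "y₁" => adPow q p x y 1
local notation "y₂" => adPow q p x y 2
local notation "y₃" => adPow q p x y 3
local notation "u" => highestRootVector q p x y

theorem skewComm_adPow_one_zero (h : IsSerrePair q p x y) (hp : p ≠ 0) : skewComm p y₁ y = 0 :=
  (adPow_inv_two_eq_zero_iff hp).1 h.adPow_two

theorem skewComm_left_adPow_three (h : IsSerrePair q p x y) (hq : q ^ 3 = 1) :
    skewComm p x y₃ = 0 := by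
  simpa only [adPow_succ, hq, one_mul] using h.adPow_four

theorem skewComm_adPow_two_zero (h : IsSerrePair q p x y) (hq : q ^ 3 = 1) (hp : p ≠ 0) :
    skewComm (p ^ 2) y₂ y = ((1 - q) * p) • (y₁ * y₁) := by
  have jacobi := skewComm_jacobi (q ^ 2) (q * p) p x y₁ y
  rw [show q * p * q ^ 2 = p by linear_combination p * hq, h.skewComm_adPow_one_zero hp,
    map_zero, ← adPow_one_eq q p x y, ← adPow_two_eq, ← sq, eq_comm, skewComm_apply _ y₁] at jacobi
  linear_combination (norm := skip) jacobi
  match_scalars <;> grind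

theorem skewComm_adPow_three_zero (h : IsSerrePair q p x y) (hq : q ^ 2 + q + 1 = 0)
    (hp : p ≠ 0) : skewComm (p ^ 3) y₃ y = (2 * p) • u := by
  have hq3 := pow_three_eq_one hq
  have leibniz := skewComm_mul (q * p) (q * p) x y₁ y₁
  have jacobi := skewComm_jacobi (q * p) (q ^ 2 * p) p x y₂ y
  rw [show q ^ 2 * p * (q * p) = p ^ 2 by linear_combination p ^ 2 * hq3,
    h.skewComm_adPow_two_zero hq3 hp, map_smul, ← adPow_one_eq q p x y, ← adPow_three_eq,
    ← pow_succ] at jacobi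
  rw [← adPow_two_eq] at leibniz
  rw [show q ^ 2 * p * p = q * p * (q * p) by ring, leibniz] at jacobi
  simp only [highestRootVector, skewComm_apply _ y₂] at jacobi ⊢
  linear_combination (norm := skip) -jacobi
  match_scalars <;> grind

theorem skewComm_adPow_three_one (h : IsSerrePair q p x y) (hq : q ^ 2 + q + 1 = 0)
    (hp : p ≠ 0) : skewComm (p ^ 2) y₃ y₁ = 0 := by
  have hq3 := pow_three_eq_one hq
  have jacobi := skewComm_jacobi (p ^ 2) p p x y₃ y
  rw [← pow_succ', h.skewComm_adPow_three_zero hq hp, map_smul, ← sq,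
    skewComm_left_highestRootVector_eq hq3, h.skewComm_left_adPow_three hq3, map_zero,
    LinearMap.zero_apply, zero_add, ← adPow_one_eq q p x y] at jacobi
  have : p • skewComm (p ^ 2) y₃ y₁ = 0 := by linear_combination (norm := module) jacobi
  exact (smul_eq_zero_iff_right hp).1 this

theorem skewComm_left_highestRootVector (h : IsSerrePair q p x y) (hq : q ^ 2 + q + 1 = 0)
    (hp : p ≠ 0) : skewComm (p ^ 2) x u = 0 := by
  have hq3 := pow_three_eq_one hq
  rw [skewComm_left_highestRootVector_eq hq3, h.skewComm_adPow_three_one hq hp]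

theorem skewComm_adPow_three_two (h : IsSerrePair q p x y) (hq : q ^ 2 + q + 1 = 0)
    (hp : p ≠ 0) : skewComm p y₃ y₂ = 0 := by
  have hq3 := pow_three_eq_one hq
  have jacobi := skewComm_jacobi p p (q * p) x y₃ y₁
  rw [← sq, h.skewComm_adPow_three_one hq hp, map_zero, h.skewComm_left_adPow_three hq3, map_zero,
    LinearMap.zero_apply, zero_add, ← adPow_two_eq] at jacobi
  exact (smul_eq_zero_iff_right hp).1 jacobi.symm

theorem skewComm_highestRootVector_adPow_one [NeZero (2 : k)] (h : IsSerrePair q p x y)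
    (hq : q ^ 2 + q + 1 = 0) (hp : p ≠ 0) : skewComm p u y₁ = 0 := by
  have hswap : skewComm p⁻¹ y y₁ = 0 := by
    rw [skewComm_inv_swap hp, h.skewComm_adPow_one_zero hp, smul_zero]
  have jacobi := skewComm_jacobi (p ^ 4)⁻¹ (p ^ 3) (p ^ 2) y₃ y y₁
  rw [show p ^ 3 * (p ^ 4)⁻¹ = p⁻¹ by field_simp, hswap, h.skewComm_adPow_three_zero hq hp,
    h.skewComm_adPow_three_one hq hp, map_zero, map_zero, smul_zero, add_zero,
    show p⁻¹ * p ^ 2 = p by field_simp, map_smul, LinearMap.smul_apply] at jacobi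
  exact (smul_eq_zero_iff_right (mul_ne_zero two_ne_zero hp)).1 jacobi.symm

theorem skewComm_adPow_two_highestRootVector [NeZero (2 : k)] (h : IsSerrePair q p x y)
    (hq : q ^ 2 + q + 1 = 0) (hp : p ≠ 0) : skewComm p y₂ u = 0 := by
  have jacobi := skewComm_jacobi p⁻¹ (p ^ 2) (q * p) x u y₁
  rw [show p ^ 2 * p⁻¹ = p by field_simp, h.skewComm_highestRootVector_adPow_one hq hp,
    h.skewComm_left_highestRootVector hq hp, map_zero, map_zero, LinearMap.zero_apply, zero_add,
    ← adPow_two_eq, skewComm_inv_swap hp, smul_smul] at jacobi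
  exact (smul_eq_zero_iff_right (mul_ne_zero (pow_ne_zero 2 hp) (by simpa using hp))).1 jacobi.symm

theorem raisesDegree_left [NeZero (2 : k)] (h : IsSerrePair q p x y)
    (hq : q ^ 2 + q + 1 = 0) (hp : p ≠ 0) :
    RaisesDegree (monomialSpan k (rootVector q p x y) rootHeight) x 1 := by
  -- Root vectors are adjoined on the left one at a time; `a_b` bounds `a` once `b` is leftmost.
  have x_y₃ : RaisesDegree (monomialSpan k ![y₃, x] ![4, 1]) x 1 :=
    (RaisesDegree.cons_self x ![] 1 ![]).cons_of_skewComm_eq_zero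
      (h.skewComm_left_adPow_three (pow_three_eq_one hq))
  have y₃_y₂ : RaisesDegree (monomialSpan k ![y₂, y₃, x] ![3, 4, 1]) y₃ 4 :=
    (RaisesDegree.cons_self y₃ ![x] 4 ![1]).cons_of_skewComm_eq_zero
      (h.skewComm_adPow_three_two hq hp)
  have x_y₂ : RaisesDegree (monomialSpan k ![y₂, y₃, x] ![3, 4, 1]) x 1 :=
    x_y₃.cons y₃_y₂ rfl
  have x_u : RaisesDegree (monomialSpan k ![u, y₂, y₃, x] ![5, 3, 4, 1]) x 1 :=
    x_y₂.cons_of_skewComm_eq_zero (h.skewComm_left_highestRootVector hq hp)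
  have u_y₁ : RaisesDegree (monomialSpan k ![y₁, u, y₂, y₃, x] ![2, 5, 3, 4, 1]) u 5 :=
    (RaisesDegree.cons_self u ![y₂, y₃, x] 5 ![3, 4, 1]).cons_of_skewComm_eq_zero
      (h.skewComm_highestRootVector_adPow_one hq hp)
  have y₂_u : RaisesDegree (monomialSpan k ![u, y₂, y₃, x] ![5, 3, 4, 1]) y₂ 3 :=
    (RaisesDegree.cons_self y₂ ![y₃, x] 3 ![4, 1]).cons_of_skewComm_eq_zero
      (h.skewComm_adPow_two_highestRootVector hq hp)
  have y₂_y₁ : RaisesDegree (monomialSpan k ![y₁, u, y₂, y₃, x] ![2, 5, 3, 4, 1]) y₂ 3 :=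
    y₂_u.cons u_y₁ rfl
  have x_y₁ : RaisesDegree (monomialSpan k ![y₁, u, y₂, y₃, x] ![2, 5, 3, 4, 1]) x 1 :=
    x_u.cons y₂_y₁ (adPow_two_eq q p x y).symm
  have y₁_y : RaisesDegree (monomialSpan k (rootVector q p x y) rootHeight) y₁ 2 :=
    (RaisesDegree.cons_self y₁ ![u, y₂, y₃, x] 2 ![5, 3, 4, 1]).cons_of_skewComm_eq_zero
      (h.skewComm_adPow_one_zero hp)
  exact x_y₁.cons y₁_y (adPow_one_eq q p x y).symm

end IsSerrePair

theorem skewComm_mem_pow {V : Submodule k A} {a b : A} {m n l : ℕ} (c : k) (ha : a ∈ V ^ m)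
    (hb : b ∈ V ^ n) (hl : m + n = l) : skewComm c a b ∈ V ^ l := by
  subst hl
  refine sub_mem (pow_add V m n ▸ Submodule.mul_mem_mul ha hb) (Submodule.smul_mem _ _ ?_)
  exact add_comm n m ▸ pow_add V n m ▸ Submodule.mul_mem_mul hb ha

theorem adPow_mem_pow {V : Submodule k A} (hx : x ∈ V) (hy : y ∈ V) (q p : k) (n : ℕ) :
    adPow q p x y n ∈ V ^ (n + 1) := by
  induction n with
  | zero => simpa [adPow_zero] using hy
  | succ n ih => exact skewComm_mem_pow _ ((pow_one V).symm ▸ hx) ih (add_comm _ _)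

theorem rootVector_mem_pow {V : Submodule k A} (hx : x ∈ V) (hy : y ∈ V) (q p : k) (i : Fin 6) :
    rootVector q p x y i ∈ V ^ rootHeight i := by
  have had := adPow_mem_pow hx hy q p
  fin_cases i
  · exact had 0
  · exact had 1
  · exact skewComm_mem_pow _ (had 2) (had 1) rfl
  · exact had 2
  · exact had 3
  · exact (pow_one V).symm ▸ hx

theorem IsSerrePair.GKdim_eq_six [NeZero (2 : k)] (h : IsSerrePair q p x y)
    (hq : q ^ 2 + q + 1 = 0) (hp : p ≠ 0) (hadjoin : Algebra.adjoin k {x, y} = ⊤)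
    (hli : LinearIndependent k (orderedMonomial (rootVector q p x y))) : GKdim k A = 6 := by
  classical
  have hx : x ∈ Submodule.span k (insert 1 {x, y}) := Submodule.subset_span (by simp)
  have hy : y ∈ Submodule.span k (insert 1 {x, y}) := Submodule.subset_span (by simp)
  refine (GKdim_eq_of_linearIndependent_orderedMonomial (S := {x, y}) (w := rootHeight)
    (by simpa using hadjoin) (by decide) ?_ (by simpa using rootVector_mem_pow hx hy q p)
    hli).trans rfl
  simp only [Finset.mem_insert, Finset.mem_singleton, forall_eq_or_imp, forall_eq]
  exact ⟨h.raisesDegree_left hq hp, .cons_self y _ 1 _⟩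

end SerrePair

section Twist

variable {k A : Type*} [Field k] [Ring A] [Algebra k A] {q p : k} {x y T : A}

theorem mul_skewComm_of_skew {a b : A} {s t : k} (ha : T * a = s • (a * T))
    (hb : T * b = t • (b * T)) (c : k) :
    T * skewComm c a b = (s * t) • (skewComm c a b * T) := by
  have hab : T * (a * b) = (s * t) • (a * b * T) := by
    rw [← mul_assoc, ha, smul_mul_assoc, mul_assoc, hb, mul_smul_comm, smul_smul, mul_assoc]
  have hba : T * (b * a) = (s * t) • (b * a * T) := by
    rw [← mul_assoc, hb, smul_mul_assoc, mul_assoc, ha, mul_smul_comm, smul_smul, mul_assoc,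
      mul_comm t]
  rw [skewComm_apply, mul_sub, mul_smul_comm, hab, hba, sub_mul, smul_mul_assoc, smul_sub,
    smul_comm c]

theorem skewComm_mul_right_of_skew {a : A} {s : k} (ha : T * a = s • (a * T)) (c : k) (b : A) :
    skewComm c a (b * T) = skewComm (c * s) a b * T := by
  simp only [skewComm_apply, mul_assoc, ha, mul_smul_comm, smul_smul, sub_mul, smul_mul_assoc]

theorem skewComm_mul_mul_of_skew {a b : A} {s t : k} (ha : T * a = s • (a * T))
    (hb : T * b = t • (b * T)) {c c' : k} (hc : c * s = t * c') :
    skewComm c (a * T) (b * T) = t • (skewComm c' a b * (T * T)) := by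
  have hab : a * T * (b * T) = t • (a * b * (T * T)) := by
    rw [mul_assoc, ← mul_assoc T, hb, smul_mul_assoc, mul_smul_comm]
    simp only [mul_assoc]
  have hba : b * T * (a * T) = s • (b * a * (T * T)) := by
    rw [mul_assoc, ← mul_assoc T, ha, smul_mul_assoc, mul_smul_comm]
    simp only [mul_assoc]
  rw [skewComm_apply, hab, hba, smul_smul, hc, skewComm_apply, sub_mul, smul_mul_assoc, smul_sub,
    smul_smul]

theorem mul_adPow_of_skew {s : k} (hx : T * x = s • (x * T)) (hy : T * y = y * T) (q p : k)
    (n : ℕ) : T * adPow q p x y n = s ^ n • (adPow q p x y n * T) := by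
  induction n with
  | zero => rw [adPow_zero, pow_zero, one_smul, hy]
  | succ n ih => rw [adPow_succ, mul_skewComm_of_skew hx ih, pow_succ']

theorem adPow_mul_right_of_skew (hp : p ≠ 0) (hx : T * x = p⁻¹ • (x * T)) (q : k) (y : A)
    (n : ℕ) : adPow q p x (y * T) n = adPow q 1 x y n * T := by
  induction n with
  | zero => rfl
  | succ n ih =>
    rw [adPow_succ, ih, skewComm_mul_right_of_skew hx, mul_inv_cancel_right₀ hp, adPow_succ,
      mul_one]

theorem highestRootVector_mul_right_of_skew (hp : p ≠ 0) (hx : T * x = p⁻¹ • (x * T))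
    (hy : T * y = y * T) (q : k) :
    highestRootVector q p x (y * T) = p⁻¹ • (highestRootVector q 1 x y * (T * T)) := by
  have hy₁ := mul_adPow_of_skew hx hy q 1 1
  have hy₂ := mul_adPow_of_skew hx hy q 1 2
  rw [pow_one] at hy₁
  rw [highestRootVector, adPow_mul_right_of_skew hp hx, adPow_mul_right_of_skew hp hx,
    skewComm_mul_mul_of_skew hy₂ hy₁ (c' := q ^ 2 * 1) (by field_simp), highestRootVector]

theorem rootVector_mul_right_of_skew (hp : p ≠ 0) (hx : T * x = p⁻¹ • (x * T))
    (hy : T * y = y * T) (q : k) :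
    rootVector q p x (y * T) =
      ![y * T, adPow q 1 x y 1 * T, p⁻¹ • (highestRootVector q 1 x y * (T * T)),
        adPow q 1 x y 2 * T, adPow q 1 x y 3 * T, x] := by
  simp only [rootVector, adPow_mul_right_of_skew hp hx,
    highestRootVector_mul_right_of_skew hp hx hy]

theorem IsSerrePair.mul_right_of_skew (h : IsSerrePair q 1 x y) (hp : p ≠ 0)
    (hx : T * x = p⁻¹ • (x * T)) (hy : T * y = y * T) : IsSerrePair q p x (y * T) where
  adPow_four := by rw [adPow_mul_right_of_skew hp hx, h.adPow_four, zero_mul]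
  adPow_two := by
    have hy₁ := mul_adPow_of_skew hx hy q 1 1
    rw [adPow_inv_two_eq_zero_iff (q := q) hp, adPow_mul_right_of_skew hp hx,
      skewComm_mul_mul_of_skew hy₁ (hy.trans (one_smul k _).symm) (c' := 1)
        (by rw [pow_one, mul_inv_cancel₀ hp, mul_one]),
      h.skewComm_adPow_one_zero one_ne_zero, zero_mul, smul_zero]

end Twist

section CubeRoot

variable {k : Type*} [Field k] {q : k}

theorem zpow_pow_three (hq : IsPrimitiveRoot q 3) (j : ℤ) : (q ^ j) ^ 3 = 1 := by
  rw [← zpow_natCast, zpow_comm, zpow_natCast, hq.pow_eq_one, _root_.one_zpow]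

theorem sq_add_self_add_one_eq_zero (hq : IsPrimitiveRoot q 3) : q ^ 2 + q + 1 = 0 := by
  have h := hq.geom_sum_eq_zero (by norm_num)
  simp only [Finset.sum_range_succ, Finset.sum_range_zero] at h
  linear_combination h

theorem one_sub_ne_zero (hq : IsPrimitiveRoot q 3) : 1 - q ≠ 0 :=
  sub_ne_zero.mpr (hq.ne_one (by norm_num)).symm

theorem one_add_ne_zero (hq : IsPrimitiveRoot q 3) : 1 + q ≠ 0 := fun h =>
  pow_ne_zero 2 (hq.ne_zero three_ne_zero) <| by
    linear_combination sq_add_self_add_one_eq_zero hq - h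

theorem one_sub_mul_self_ne_zero (hq : IsPrimitiveRoot q 3) : 1 - q * q ≠ 0 := by
  convert mul_ne_zero (one_sub_ne_zero hq) (one_add_ne_zero hq) using 1
  ring

end CubeRoot

section Model

/-- The vector space with basis `ℤ⁶`, on which the Serre algebra acts by the formulas of left
multiplication on its PBW basis. Integer exponents keep the shifts of the basis free of truncated
subtraction. -/
abbrev PBWModule (k : Type*) [Field k] : Type _ := (ℤ × ℤ × ℤ × ℤ × ℤ × ℤ) →₀ k

namespace PBWModule

variable {k : Type*} [Field k]

/-- The basis vector of `PBWModule k` at a lattice point, standing for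
`y ^ i * y₁ ^ j * u ^ l * y₂ ^ m * y₃ ^ n * x ^ r`. -/
def vec (k : Type*) [Field k] (i j l m n r : ℤ) : PBWModule k :=
  Finsupp.single (i, j, l, m, n, r) 1

/-- The endomorphism of `PBWModule k` with prescribed values on the basis. -/
def endo (F : ℤ → ℤ → ℤ → ℤ → ℤ → ℤ → PBWModule k) : Module.End k (PBWModule k) :=
  Finsupp.linearCombination k fun v => F v.1 v.2.1 v.2.2.1 v.2.2.2.1 v.2.2.2.2.1 v.2.2.2.2.2

@[simp]
theorem endo_vec (F : ℤ → ℤ → ℤ → ℤ → ℤ → ℤ → PBWModule k) (i j l m n r : ℤ) :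
    endo F (vec k i j l m n r) = F i j l m n r := by
  simp [endo, vec]

theorem endo_ext {f g : Module.End k (PBWModule k)}
    (h : ∀ i j l m n r, f (vec k i j l m n r) = g (vec k i j l m n r)) : f = g := by
  refine Finsupp.lhom_ext' fun ⟨i, j, l, m, n, r⟩ => LinearMap.ext_ring ?_
  exact h i j l m n r

/-- The `q`-integer `[j]_q`. -/
def qInt (q : k) (j : ℤ) : k := (1 - q ^ j) / (1 - q)

/-- Left multiplication by `x` in the untwisted case `p = 1`. The coefficient at
`y₁ ^ (j - 2) * u` is the Gaussian binomial coefficient `j` over `2`. -/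
def opX (q : k) : Module.End k (PBWModule k) := endo fun i j l m n r =>
  (i : k) • vec k (i - 1) (j + 1) l m n r
  + (q ^ j * qInt q j / q) • vec k i (j - 1) l (m + 1) n r
  + (qInt q j * qInt q (j - 1) / (1 + q)) • vec k i (j - 1 - 1) (l + 1) m n r
  + (q ^ j * qInt (q ^ 2) m) • vec k i j l (m - 1) (n + 1) r
  + (q ^ j * (q ^ m) ^ 2) • vec k i j l m n (r + 1)

/-- Left multiplication by `y` in the untwisted case. -/
def opY : Module.End k (PBWModule k) := endo fun i j l m n r => vec k (i + 1) j l m n r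

/-- Left multiplication by the root vector `y₁` of degree `α + β`, in the untwisted case. -/
def opY₁ : Module.End k (PBWModule k) := endo fun i j l m n r => vec k i (j + 1) l m n r

/-- Left multiplication by the root vector `y₂` of degree `2α + β`, in the untwisted case. -/
def opY₂ (q : k) : Module.End k (PBWModule k) := endo fun i j l m n r =>
  (i * (1 - q) : k) • vec k (i - 1) (j + 1 + 1) l m n r
  + ((q ^ j) ^ 2) • vec k i j l (m + 1) n r
  + qInt (q ^ 2) j • vec k i (j - 1) (l + 1) m n r

/-- Left multiplication by the root vector `y₃` of degree `3α + β`, in the untwisted case. -/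
def opY₃ : Module.End k (PBWModule k) := endo fun i j l m n r =>
  vec k i j l m (n + 1) r + (2 * i : k) • vec k (i - 1) j (l + 1) m n r
  + (3 * i * (i - 1) : k) • vec k (i - 1 - 1) (j + 1 + 1 + 1) l m n r

/-- Left multiplication by the root vector `u` of degree `3α + 2β`, in the untwisted case. -/
def opU : Module.End k (PBWModule k) := endo fun i j l m n r =>
  vec k i j (l + 1) m n r + (3 * i : k) • vec k (i - 1) (j + 1 + 1 + 1) l m n r

/-- The diagonal operator scaling vectors of `x`-degree `a` by `p ^ (-a)`. -/
def opT (p : k) : Module.End k (PBWModule k) := endo fun i j l m n r =>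
  (p ^ j * (p ^ l) ^ 3 * (p ^ m) ^ 2 * (p ^ n) ^ 3 * p ^ r)⁻¹ • vec k i j l m n r

variable {q p : k}

theorem skewComm_opX_opY (q : k) :
    skewComm (1 : k) (opX q) opY = (opY₁ : Module.End k (PBWModule k)) := by
  refine endo_ext fun i j l m n r => ?_
  simp only [skewComm_apply, opX, opY, opY₁, Module.End.mul_apply, LinearMap.sub_apply,
    LinearMap.smul_apply, endo_vec, map_add, map_smul, sub_add_cancel, add_sub_cancel_right,
    Int.cast_add, Int.cast_one]
  module

theorem skewComm_opX_opY₁ (hq0 : q ≠ 0) (hq1 : q ≠ 1) : skewComm q (opX q) opY₁ = opY₂ q := by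
  have hsub : 1 - q ≠ 0 := sub_ne_zero.mpr hq1.symm
  refine endo_ext fun i j l m n r => ?_
  simp only [skewComm_apply, opX, opY₁, opY₂, qInt, sq, mul_zpow, Module.End.mul_apply,
    LinearMap.sub_apply, LinearMap.smul_apply, endo_vec, map_add, map_smul, sub_add_cancel,
    add_sub_cancel_right, zpow_add_one₀ hq0, zpow_sub_one₀ hq0]
  match_scalars <;> grind

theorem skewComm_opX_opY₂ (hq : IsPrimitiveRoot q 3) :
    skewComm (q ^ 2) (opX q) (opY₂ q) = opY₃ := by
  have hq0 : q ≠ 0 := hq.ne_zero three_ne_zero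
  have hsum := sq_add_self_add_one_eq_zero hq
  have hsub := one_sub_ne_zero hq
  have hsub_sq := one_sub_mul_self_ne_zero hq
  refine endo_ext fun i j l m n r => ?_
  simp only [skewComm_apply, opX, opY₂, opY₃, qInt, sq, mul_zpow, Module.End.mul_apply,
    LinearMap.sub_apply, LinearMap.smul_apply, endo_vec, map_add, map_smul, sub_add_cancel,
    add_sub_cancel_right, Int.cast_one, Int.cast_sub, zpow_add_one₀ hq0, zpow_sub_one₀ hq0]
  have := zpow_pow_three hq j
  match_scalars <;> grind

theorem skewComm_opX_opY₃ (hq : IsPrimitiveRoot q 3) :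
    skewComm (1 : k) (opX q) opY₃ = 0 := by
  have hq0 : q ≠ 0 := hq.ne_zero three_ne_zero
  have hsum := sq_add_self_add_one_eq_zero hq
  refine endo_ext fun i j l m n r => ?_
  simp only [skewComm_apply, opX, opY₃, qInt, sq, mul_zpow, Module.End.mul_apply,
    LinearMap.sub_apply, LinearMap.smul_apply, LinearMap.zero_apply, endo_vec, map_add, map_smul,
    sub_add_cancel, add_sub_cancel_right, Int.cast_one, Int.cast_sub, zpow_add_one₀ hq0,
    zpow_sub_one₀ hq0]
  match_scalars <;> grind

theorem skewComm_opY₂_opY₁ (hq : IsPrimitiveRoot q 3) :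
    skewComm (q ^ 2) (opY₂ q) opY₁ = opU := by
  have hq0 : q ≠ 0 := hq.ne_zero three_ne_zero
  have hsum := sq_add_self_add_one_eq_zero hq
  have hsub := one_sub_ne_zero hq
  refine endo_ext fun i j l m n r => ?_
  simp only [skewComm_apply, opY₁, opY₂, opU, qInt, sq, mul_zpow, Module.End.mul_apply,
    LinearMap.sub_apply, LinearMap.smul_apply, endo_vec, map_add, map_smul, sub_add_cancel,
    add_sub_cancel_right, zpow_add_one₀ hq0]
  match_scalars <;> grind

theorem skewComm_opY₁_opY : skewComm (1 : k) opY₁ (opY : Module.End k (PBWModule k)) = 0 := by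
  refine endo_ext fun i j l m n r => ?_
  simp [skewComm_apply, opY, opY₁]

theorem adPow_one (q : k) : adPow q 1 (opX q) opY 1 = opY₁ := by
  rw [adPow_one_eq, skewComm_opX_opY]

theorem adPow_two (hq : IsPrimitiveRoot q 3) : adPow q 1 (opX q) opY 2 = opY₂ q := by
  rw [adPow_two_eq, adPow_one, mul_one,
    skewComm_opX_opY₁ (hq.ne_zero three_ne_zero) (hq.ne_one (by norm_num))]

theorem adPow_three (hq : IsPrimitiveRoot q 3) : adPow q 1 (opX q) opY 3 = opY₃ := by
  rw [adPow_three_eq, adPow_two hq, mul_one, skewComm_opX_opY₂ hq]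

theorem highestRootVector_eq (hq : IsPrimitiveRoot q 3) :
    highestRootVector q 1 (opX q) opY = opU := by
  rw [highestRootVector, adPow_two hq, adPow_one, mul_one, skewComm_opY₂_opY₁ hq]

theorem isSerrePair_one (hq : IsPrimitiveRoot q 3) : IsSerrePair q 1 (opX q) opY where
  adPow_four := by
    rw [adPow_succ, adPow_three hq, hq.pow_eq_one, mul_one, skewComm_opX_opY₃ hq]
  adPow_two := by
    rw [adPow_inv_two_eq_zero_iff (q := q) one_ne_zero, adPow_one, skewComm_opY₁_opY]

theorem opT_mul_opX (hp : p ≠ 0) (q : k) : opT p * opX q = p⁻¹ • (opX q * opT p) := by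
  refine endo_ext fun i j l m n r => ?_
  simp only [opX, opT, Module.End.mul_apply, LinearMap.smul_apply, endo_vec, map_smul, map_add,
    zpow_add_one₀ hp, zpow_sub_one₀ hp]
  match_scalars <;> field_simp

theorem opT_mul_opY (p : k) : opT p * opY = opY * opT p := by
  refine endo_ext fun i j l m n r => ?_
  simp only [opY, opT, Module.End.mul_apply, endo_vec, map_smul]

theorem isSerrePair (hq : IsPrimitiveRoot q 3) (hp : p ≠ 0) :
    IsSerrePair q p (opX q) (opY * opT p) :=
  (isSerrePair_one hq).mul_right_of_skew hp (opT_mul_opX hp q) (opT_mul_opY p)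

theorem rootVector_eq (hq : IsPrimitiveRoot q 3) (hp : p ≠ 0) :
    rootVector q p (opX q) (opY * opT p) =
      ![opY * opT p, opY₁ * opT p, p⁻¹ • (opU * (opT p * opT p)), opY₂ q * opT p, opY₃ * opT p,
        opX q] := by
  rw [rootVector_mul_right_of_skew hp (opT_mul_opX hp q) (opT_mul_opY p), adPow_one, adPow_two hq,
    adPow_three hq, highestRootVector_eq hq]

/-- The basis vectors of `PBWModule k` in the positive orthant. -/
def monomialVec (k : Type*) [Field k] (e : Fin 6 → ℕ) : PBWModule k :=
  vec k (e 0) (e 1) (e 2) (e 3) (e 4) (e 5)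

theorem linearIndependent_monomialVec : LinearIndependent k (monomialVec k) := by
  refine (Finsupp.basisSingleOne (R := k)).linearIndependent.comp
    (fun e : Fin 6 → ℕ => ((e 0 : ℤ), (e 1 : ℤ), (e 2 : ℤ), (e 3 : ℤ), (e 4 : ℤ), (e 5 : ℤ)))
    fun e e' h => ?_
  simp only [Prod.mk.injEq, Nat.cast_inj] at h
  ext i
  fin_cases i <;> simp [h]

theorem untwistedRootVector_apply_monomialVec (q : k) (i : Fin 6) (e : Fin 6 → ℕ)
    (he : ∀ j < i, e j = 0) :
    ![opY, opY₁, opU, opY₂ q, opY₃, opX q] i (monomialVec k e) =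
      monomialVec k (e + Pi.single i 1) := by
  fin_cases i
  · simp [monomialVec, opY]
  · simp [monomialVec, opY₁]
  · simp [monomialVec, opU, he 0]
  · simp [monomialVec, opY₂, qInt, he 0, he 1]
  · simp [monomialVec, opY₃, he 0]
  · simp [monomialVec, opX, qInt, he 0, he 1, he 3]

theorem exists_opT_monomialVec_eq_smul (hp : p ≠ 0) (e : Fin 6 → ℕ) :
    ∃ c : k, c ≠ 0 ∧ opT p (monomialVec k e) = c • monomialVec k e :=
  ⟨_, by positivity, endo_vec ..⟩

theorem exists_rootVector_apply_monomialVec_eq_smul (hq : IsPrimitiveRoot q 3) (hp : p ≠ 0)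
    (i : Fin 6) (e : Fin 6 → ℕ) (he : ∀ j < i, e j = 0) :
    ∃ c : k, c ≠ 0 ∧ rootVector q p (opX q) (opY * opT p) i (monomialVec k e) =
      c • monomialVec k (e + Pi.single i 1) := by
  obtain ⟨c, hc, hce⟩ := exists_opT_monomialVec_eq_smul hp e
  rw [rootVector_eq hq hp, ← untwistedRootVector_apply_monomialVec q i e he]
  fin_cases i
  · exact ⟨c, hc, by simp [hce]⟩
  · exact ⟨c, hc, by simp [hce]⟩
  · exact ⟨p⁻¹ * (c * c), by positivity, by simp [hce, smul_smul]⟩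
  · exact ⟨c, hc, by simp [hce]⟩
  · exact ⟨c, hc, by simp [hce]⟩
  · exact ⟨1, one_ne_zero, by simp⟩

theorem linearIndependent_orderedMonomial_rootVector (hq : IsPrimitiveRoot q 3) (hp : p ≠ 0) :
    LinearIndependent k (orderedMonomial (rootVector q p (opX q) (opY * opT p))) :=
  linearIndependent_orderedMonomial linearIndependent_monomialVec
    (exists_rootVector_apply_monomialVec_eq_smul hq hp)

end PBWModule

end Model

section Presentation

variable {k : Type*} [Field k]

/-- The quantum Serre relations of type `G₂` with `p = q₁₂`, in the form that `RingQuot` takes. -/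
def serreRel (q p : k) (a b : FreeAlgebra k (Fin 2)) : Prop :=
  b = 0 ∧ (a = adPow q p (FreeAlgebra.ι k 0) (FreeAlgebra.ι k 1) 4 ∨
    a = adPow 1 p⁻¹ (FreeAlgebra.ι k 1) (FreeAlgebra.ι k 0) 2)

/-- The algebra generated by a universal Serre pair. -/
abbrev SerreAlgebra (q p : k) : Type _ := RingQuot (serreRel q p)

theorem brk_gen_zero_gen_one (q p : k) :
    (brk ![![q, p], ![p⁻¹, 1]] (gen 0) (brk ![![q, p], ![p⁻¹, 1]] (gen 0)
      (brk ![![q, p], ![p⁻¹, 1]] (gen 0) (brk ![![q, p], ![p⁻¹, 1]] (gen 0) (gen 1))))).1 =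
      adPow q p (FreeAlgebra.ι k 0) (FreeAlgebra.ι k 1) 4 := by
  simp [brk, gen, qb, ee, Fin.prod_univ_two, adPow, skewComm_apply]

theorem brk_gen_one_gen_zero (q p : k) :
    (brk ![![q, p], ![p⁻¹, 1]] (gen 1) (brk ![![q, p], ![p⁻¹, 1]] (gen 1) (gen 0))).1 =
      adPow 1 p⁻¹ (FreeAlgebra.ι k 1) (FreeAlgebra.ι k 0) 2 := by
  simp [brk, gen, qb, ee, adPow, skewComm_apply]

namespace SerreAlgebra

variable {A : Type*} [Ring A] [Algebra k A] {q p : k} {x y : A}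

/-- The generators of the Serre algebra. -/
def of (q p : k) (a : Fin 2) : SerreAlgebra q p :=
  RingQuot.mkAlgHom k (serreRel q p) (FreeAlgebra.ι k a)

theorem isSerrePair (q p : k) : IsSerrePair q p (of q p 0) (of q p 1) where
  adPow_four := by
    rw [of, of, ← map_adPow, ← map_zero (RingQuot.mkAlgHom k (serreRel q p))]
    exact RingQuot.mkAlgHom_rel k ⟨rfl, .inl rfl⟩
  adPow_two := by
    rw [of, of, ← map_adPow, ← map_zero (RingQuot.mkAlgHom k (serreRel q p))]
    exact RingQuot.mkAlgHom_rel k ⟨rfl, .inr rfl⟩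

theorem adjoin_of (q p : k) : Algebra.adjoin k {of q p 0, of q p 1} = ⊤ := by
  have hgen : ({of q p 0, of q p 1} : Set (SerreAlgebra q p)) =
      RingQuot.mkAlgHom k (serreRel q p) '' Set.range (FreeAlgebra.ι k) := by
    rw [← Set.range_comp]
    ext z
    simp [of, eq_comm]
  rw [hgen, ← AlgHom.map_adjoin, FreeAlgebra.adjoin_range_ι, Algebra.map_top,
    AlgHom.range_eq_top]
  exact RingQuot.mkAlgHom_surjective k _

theorem exists_algHom_of_isSerrePair (h : IsSerrePair q p x y) :
    ∃ f : SerreAlgebra q p →ₐ[k] A, f (of q p 0) = x ∧ f (of q p 1) = y := by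
  have hrel : ∀ ⦃a b⦄, serreRel q p a b →
      FreeAlgebra.lift k ![x, y] a = FreeAlgebra.lift k ![x, y] b := by
    rintro _ _ ⟨rfl, rfl | rfl⟩
    · simpa [map_adPow] using h.adPow_four
    · simpa [map_adPow] using h.adPow_two
  exact ⟨RingQuot.liftAlgHom k ⟨_, hrel⟩, by simp [of], by simp [of]⟩

theorem linearIndependent_orderedMonomial_rootVector (hq : IsPrimitiveRoot q 3) (hp : p ≠ 0) :
    LinearIndependent k (orderedMonomial (rootVector q p (of q p 0) (of q p 1))) := by
  obtain ⟨f, hx, hy⟩ := exists_algHom_of_isSerrePair (PBWModule.isSerrePair hq hp)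
  have hli := PBWModule.linearIndependent_orderedMonomial_rootVector hq hp
  have hmap : f ∘ orderedMonomial (rootVector q p (of q p 0) (of q p 1)) =
      orderedMonomial (f ∘ rootVector q p (of q p 0) (of q p 1)) :=
    funext (map_orderedMonomial (f : SerreAlgebra q p →* Module.End k (PBWModule k)) _)
  rw [← hx, ← hy, ← map_comp_rootVector, ← hmap] at hli
  exact LinearIndependent.of_comp f.toLinearMap hli

theorem GKdim_eq_six [NeZero (2 : k)] (hq : IsPrimitiveRoot q 3) (hp : p ≠ 0) :
    GKdim k (SerreAlgebra q p) = 6 :=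
  (isSerrePair q p).GKdim_eq_six (sq_add_self_add_one_eq_zero hq) hp (adjoin_of q p)
    (linearIndependent_orderedMonomial_rootVector hq hp)

end SerreAlgebra

end Presentation

end Stmt7

theorem stmt7_general {k : Type*} [Field k] [NeZero (2 : k)]
    (q q12 : k) (hq3 : q ^ 3 = 1) (hq1 : q ≠ 1) (hq12 : q12 ≠ 0)
    (Q : Fin 2 → Fin 2 → k) (hQ : Q = ![![q, q12], ![q12⁻¹, 1]])
    (rel : FreeAlgebra k (Fin 2) → FreeAlgebra k (Fin 2) → Prop)
    (hrel : rel = fun a b => b = 0 ∧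
      (a = (brk Q (gen 0) (brk Q (gen 0) (brk Q (gen 0) (brk Q (gen 0) (gen 1))))).1
        ∨ a = (brk Q (gen 1) (brk Q (gen 1) (gen 0))).1)) :
    GKdim k (RingQuot rel) = 6 := by
  have hq : IsPrimitiveRoot q 3 :=
    IsPrimitiveRoot.iff_orderOf.mpr (orderOf_eq_prime hq3 hq1)
  have hserre : rel = serreRel q q12 := by
    rw [hrel, hQ, brk_gen_zero_gen_one, brk_gen_one_gen_zero]
    rfl
  rw [hserre]
  exact SerreAlgebra.GKdim_eq_six hq hq12

/-- Let `q` be a primitive third root of unity and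
`B = k⟨x_1,x_2⟩/⟨(ad_c x_1)^4 x_2, (ad_c x_2)^2 x_1⟩` with braiding matrix
`q_11 = q`, `q_22 = 1`, `q_12 q_21 = 1`.  Then the Gelfand–Kirillov dimension of `B`
equals `6`. -/
theorem stmt7 {k : Type*} [Field k] [CharZero k]
    (q q12 : k) (hq3 : q ^ 3 = 1) (hq1 : q ≠ 1) (hq12 : q12 ≠ 0)
    (Q : Fin 2 → Fin 2 → k) (hQ : Q = ![![q, q12], ![q12⁻¹, 1]])
    (rel : FreeAlgebra k (Fin 2) → FreeAlgebra k (Fin 2) → Prop)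
    (hrel : rel = fun a b => b = 0 ∧
      (a = (brk Q (gen 0) (brk Q (gen 0) (brk Q (gen 0) (brk Q (gen 0) (gen 1))))).1
        ∨ a = (brk Q (gen 1) (brk Q (gen 1) (gen 0))).1)) :
    GKdim k (RingQuot rel) = 6 :=
  stmt7_general q q12 hq3 hq1 hq12 Q hQ rel hrel

end
end
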